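/- Let k ≥ 2 be an integer and j ∈ {1,…,k−1}. With high probability, for all p ≥ p_{M_j} simultaneously, the complex G_p is F_2-cohomologically j-connected, i.e. H^0(G_p;F_2) ≅ F_2 and H^i(G_p;F_2) = 0 for all i ∈ {1,…,j}. -/

import Mathlib

open MeasureTheory Filter

attribute [local instance] Classical.propDecidable

namespace RSC

variable {V : Type*}

/-- `A` is an `i`-dimensional simplex of the complex `G`. -/
def IsSimplex (G : Set (Finset V)) (i : ℕ) (A : Finset V) : Prop :=
  A ∈ G ∧ A.card = i + 1

/-- A `k`-dimensional simplicial complex on vertex set `V`. -/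
structure IsKComplex (G : Set (Finset V)) (k : ℕ) : Prop where
  down : ∀ A ∈ G, ∀ B, B ⊆ A → B.Nonempty → B ∈ G
  singletons : ∀ v : V, ({v} : Finset V) ∈ G
  dim : ∀ A ∈ G, A.card ≤ k + 1

/-- `i`-cochains with `F₂`-coefficients. -/
abbrev Cochain (G : Set (Finset V)) (i : ℕ) : Type _ :=
  {A : Finset V // IsSimplex G i A} → ZMod 2

/-- The coboundary map `δ^i : C^i(G) → C^{i+1}(G)`. -/
noncomputable def coboundary (G : Set (Finset V)) (i : ℕ) :
    Cochain G i →ₗ[ZMod 2] Cochain G (i + 1) where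
  toFun f := fun σ => ∑ τ ∈ Finset.powersetCard (i + 1) (σ : Finset V),
      if h : IsSimplex G i τ then f ⟨τ, h⟩ else 0
  map_add' f g := by
    funext σ
    simp only [Pi.add_apply, ← Finset.sum_add_distrib]
    refine Finset.sum_congr rfl fun τ _ => ?_
    by_cases h : IsSimplex G i τ <;> simp [h]
  map_smul' c f := by
    funext σ
    simp only [Pi.smul_apply, RingHom.id_apply, Finset.smul_sum]
    refine Finset.sum_congr rfl fun τ _ => ?_
    by_cases h : IsSimplex G i τ <;> simp [h]

/-- The submodule of `i`-cocycles. -/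
noncomputable def cocycles (G : Set (Finset V)) (i : ℕ) : Submodule (ZMod 2) (Cochain G i) :=
  LinearMap.ker (coboundary G i)

/-- The submodule of `i`-coboundaries (`δ^{-1}` is the zero map). -/
noncomputable def coboundaries (G : Set (Finset V)) : (i : ℕ) → Submodule (ZMod 2) (Cochain G i)
  | 0 => ⊥
  | (i + 1) => LinearMap.range (coboundary G i)

/-- The `i`-th cohomology group `H^i(G;F₂) = ker δ^i / im δ^{i-1}`. -/
noncomputable abbrev cohomology (G : Set (Finset V)) (i : ℕ) :=
  (cocycles G i) ⧸ ((coboundaries G i).comap (cocycles G i).subtype)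

/-- `F₂`-cohomological `j`-connectedness: `H^0 ≅ F₂` and `H^i = 0` for `1 ≤ i ≤ j`. -/
def CohomConnected (G : Set (Finset V)) (j : ℕ) : Prop :=
  Nonempty (cohomology G 0 ≃ₗ[ZMod 2] ZMod 2) ∧
    ∀ i, 1 ≤ i → i ≤ j → Subsingleton (cohomology G i)

/-- The `j`-flower in `K` with centre `C`: the set of petals `C ∪ {w}`, `w ∈ K \ C`. -/
def Flower [DecidableEq V] (K C : Finset V) : Set (Finset V) :=
  {P | ∃ w ∈ K \ C, P = insert w C}

/-- A copy of `M_j^-`: a `k`-simplex `K` together with a `(j-1)`-simplex `C ⊆ K` such that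
each petal of the flower `F(K,C)` is contained in no `k`-simplex other than `K`. -/
def IsMjMinus [DecidableEq V] (G : Set (Finset V)) (k j : ℕ) (K C : Finset V) : Prop :=
  IsSimplex G k K ∧ C ∈ G ∧ C.card = j ∧ C ⊆ K ∧
    ∀ P ∈ Flower K C, ∀ K', IsSimplex G k K' → P ⊆ K' → K' = K

/-- A `j`-cycle: every `(j-1)`-simplex lies in an even number of members of `J`. -/
def IsCycle (G : Set (Finset V)) (j : ℕ) (J : Finset (Finset V)) : Prop :=
  (∀ σ ∈ J, IsSimplex G j σ) ∧
    ∀ τ : Finset V, τ.card = j → Even (J.filter (fun σ => τ ⊆ σ)).card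

/-- A copy of `M_j`. -/
def IsMj [DecidableEq V] (G : Set (Finset V)) (k j : ℕ) (K C : Finset V)
    (J : Finset (Finset V)) : Prop :=
  IsMjMinus G k j K C ∧ IsCycle G j J ∧ ∃! P : Finset V, P ∈ J ∧ P ∈ Flower K C

/-- A `j`-shell: a `(j+2)`-set all of whose `(j+1)`-subsets are `j`-simplices. -/
def IsShell (G : Set (Finset V)) (j : ℕ) (A : Finset V) : Prop :=
  A.card = j + 2 ∧ ∀ τ ⊆ A, τ.card = j + 1 → τ ∈ G

/-- A copy of `M_j^*`. -/
def IsMjStar [DecidableEq V] (G : Set (Finset V)) (k j : ℕ) (K C : Finset V) (w a : V) : Prop :=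
  IsMjMinus G k j K C ∧ w ∈ K \ C ∧ a ∉ K ∧ IsShell G j (insert a (insert w C))

/-- The support of a cochain. -/
def cochainSupport {G : Set (Finset V)} {i : ℕ} (f : Cochain G i) : Set (Finset V) :=
  {A | ∃ h : IsSimplex G i A, f ⟨A, h⟩ = 1}

/-- A cochain arising from a copy of `M_j^-`: its support is the flower `F(K,C)`. -/
def ArisesFrom [DecidableEq V] (G : Set (Finset V)) (k j : ℕ) (f : Cochain G j)
    (K C : Finset V) : Prop :=
  IsMjMinus G k j K C ∧ cochainSupport f = Flower K C

/-- A `j`-cocycle generated by copies of `M_j^-`: it differs by a `j`-coboundary from a sum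
of `j`-cocycles arising from copies of `M_j^-`. -/
def GeneratedByMjMinus [DecidableEq V] (G : Set (Finset V)) (k j : ℕ) (f : Cochain G j) : Prop :=
  ∃ (m : ℕ) (fs : Fin m → Cochain G j),
    (∀ i, ∃ K C, ArisesFrom G k j (fs i) K C) ∧
      f - (∑ i, fs i) ∈ coboundaries G j

/-- Membership in `N_G`: a `j`-cocycle not generated by copies of `M_j^-`. -/
def InNG [DecidableEq V] (G : Set (Finset V)) (k j : ℕ) (f : Cochain G j) : Prop :=
  f ∈ cocycles G j ∧ ¬ GeneratedByMjMinus G k j f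

/-- Traversability: the transitive closure of "lying in a common `k`-simplex" is `S × S`. -/
def Traversable (G : Set (Finset V)) (k : ℕ) (S : Set (Finset V)) : Prop :=
  ∀ σ₁ ∈ S, ∀ σ₂ ∈ S,
    Relation.TransGen
      (fun a b => a ∈ S ∧ b ∈ S ∧ ∃ K, IsSimplex G k K ∧ a ⊆ K ∧ b ⊆ K) σ₁ σ₂

/-- A local obstacle: a `k`-simplex containing at least `k-j+1` many `j`-simplices,
each lying in no other `k`-simplex. -/
def IsLocalObstacle (G : Set (Finset V)) (k j : ℕ) (K : Finset V) : Prop :=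
  IsSimplex G k K ∧
    k - j + 1 ≤ {σ : Finset V | IsSimplex G j σ ∧ σ ⊆ K ∧
      ∀ K', IsSimplex G k K' → σ ⊆ K' → K' = K}.ncard

/-- The random complex `G_p` given birth times `t`: all singletons together with all
non-empty subsets of `(k+1)`-sets with birth time at most `p`. -/
def complexAt (k n : ℕ) (t : Finset (Fin n) → ℝ) (p : ℝ) : Set (Finset (Fin n)) :=
  {A | (∃ v, A = {v}) ∨
    (A.Nonempty ∧ ∃ K : Finset (Fin n), K.card = k + 1 ∧ t K ≤ p ∧ A ⊆ K)}

/-- The distribution of birth times: i.i.d. uniform on `[0,1]`. -/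
noncomputable def birthMeasure (n : ℕ) : Measure (Finset (Fin n) → ℝ) :=
  Measure.pi fun _ => volume.restrict (Set.Icc (0 : ℝ) 1)

/-- `p_{M_j}`: the supremum of the probabilities `p ∈ [0,1]` at which `G_p` contains
a copy of `M_j`. -/
noncomputable def pMj (k j n : ℕ) (t : Finset (Fin n) → ℝ) : ℝ :=
  sSup {p : ℝ | p ∈ Set.Icc (0 : ℝ) 1 ∧
    ∃ K C J, IsMj (complexAt k n t p) k j K C J}

/-- The threshold `p_j`. -/
noncomputable def pjThreshold (k j n : ℕ) : ℝ :=
  ((j + 1 : ℝ) * Real.log n + Real.log (Real.log n)) * (Nat.factorial (k - j)) /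
    (((k - j + 1 : ℕ) : ℝ) * (n : ℝ) ^ (k - j))

/-- `p_j^-`. -/
noncomputable def pjMinus (k j n : ℕ) : ℝ :=
  (1 - 1 / Real.sqrt (Real.log n)) * ((j + 1 : ℝ) * Real.log n) * (Nat.factorial (k - j)) /
    (((k - j + 1 : ℕ) : ℝ) * (n : ℝ) ^ (k - j))

/-- `p_{j-1}^-`. -/
noncomputable def pjPrevMinus (k j n : ℕ) : ℝ :=
  (1 - 1 / Real.sqrt (Real.log n)) * ((j : ℝ) * Real.log n) * (Nat.factorial (k - j + 1)) /
    (((k - j + 2 : ℕ) : ℝ) * (n : ℝ) ^ (k - j + 1))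

/-- `p_j^{(1)}`. -/
noncomputable def pjOne (k j n : ℕ) : ℝ :=
  1 / (10 * ((j : ℝ) + 1) * (Nat.choose (k + 1) (j + 1)) * (n : ℝ) ^ (k - j))

/-- The number of copies of `M_j^-` in `G`. -/
noncomputable def countMjMinus (k j : ℕ) {n : ℕ} (G : Set (Finset (Fin n))) : ℕ :=
  {x : Finset (Fin n) × Finset (Fin n) | IsMjMinus G k j x.1 x.2}.ncard

/-- The number of copies of `M_j^*` in `G`. -/
noncomputable def countMjStar (k j : ℕ) {n : ℕ} (G : Set (Finset (Fin n))) : ℕ :=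
  {x : Finset (Fin n) × Finset (Fin n) × Fin n × Fin n |
    IsMjStar G k j x.1 x.2.1 x.2.2.1 x.2.2.2}.ncard


/-! ### Function-level description of cohomology -/

/-- `F₂`-coboundary of a function on finite sets, evaluated at `R` (using subsets of size `i`). -/
noncomputable def bd (i : ℕ) (F : Finset V → ZMod 2) (R : Finset V) : ZMod 2 :=
  ∑ σ ∈ Finset.powersetCard i R, F σ

/-- Vanishing of the `j`-th cohomology, stated for functions on all finite sets. -/
def Van (G : Set (Finset V)) (j : ℕ) : Prop :=
  ∀ F : Finset V → ZMod 2, (∀ R ∈ G, R.card = j + 2 → bd (j + 1) F R = 0) →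
    ∃ g : Finset V → ZMod 2, ∀ σ ∈ G, σ.card = j + 1 → F σ = bd j g σ

lemma subsingleton_of_van (G : Set (Finset V))
    (down : ∀ A ∈ G, ∀ B, B ⊆ A → B.Nonempty → B ∈ G) (j : ℕ) (hj : 1 ≤ j)
    (h : Van G j) : Subsingleton (cohomology G j) := by
  obtain ⟨i, rfl⟩ : ∃ i, j = i + 1 := ⟨j - 1, by omega⟩
  rw [Submodule.Quotient.subsingleton_iff, Submodule.comap_subtype_eq_top]
  intro f hf
  have hf' : coboundary G (i + 1) f = 0 := hf
  obtain ⟨g, hg⟩ := h (fun σ => if hs : IsSimplex G (i + 1) σ then f ⟨σ, hs⟩ else 0) (by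
    intro R hR hc
    have := congrFun hf' ⟨R, hR, hc⟩
    exact this)
  change f ∈ LinearMap.range (coboundary G i)
  refine ⟨fun τ => g τ.1, ?_⟩
  funext σ
  have h1 := hg σ.1 σ.2.1 σ.2.2
  simp only [dif_pos σ.2] at h1
  have h2 : f σ = f ⟨σ.1, σ.2⟩ := rfl
  rw [h2, h1]
  change ∑ τ ∈ _, _ = ∑ τ ∈ _, _
  refine Finset.sum_congr rfl fun τ hτ => ?_
  rw [Finset.mem_powersetCard] at hτ
  have : IsSimplex G i τ := ⟨down _ σ.2.1 _ hτ.1 (Finset.card_pos.1 (by omega)), hτ.2⟩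
  rw [dif_pos this]

lemma h0_of_van (G : Set (Finset V)) (v : V)
    (sing : ∀ v : V, ({v} : Finset V) ∈ G)
    (h : Van G 0) : Nonempty (cohomology G 0 ≃ₗ[ZMod 2] ZMod 2) := by
  have hv : IsSimplex G 0 {v} := ⟨sing v, by simp⟩
  -- evaluation at `v`
  let ev : cocycles G 0 →ₗ[ZMod 2] ZMod 2 :=
    (LinearMap.proj (⟨{v}, hv⟩ : {A : Finset V // IsSimplex G 0 A})).comp (cocycles G 0).subtype
  have hker : (coboundaries G 0).comap (cocycles G 0).subtype = LinearMap.ker ev := by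
    ext f
    simp only [coboundaries, Submodule.mem_comap, Submodule.mem_bot, LinearMap.mem_ker]
    constructor
    · intro hf
      change f.1 _ = 0
      have : f.1 = 0 := hf
      rw [this]; rfl
    · intro hf
      have hf0 : f.1 ⟨{v}, hv⟩ = 0 := hf
      have hf' : coboundary G 0 f.1 = 0 := f.2
      obtain ⟨g, hg⟩ := h (fun σ => if hs : IsSimplex G 0 σ then f.1 ⟨σ, hs⟩ else 0) (by
        intro R hR hc
        have := congrFun hf' ⟨R, hR, hc⟩
        exact this)
      have e1 := hg {v} hv.1 hv.2
      simp only [dif_pos hv, bd, Finset.powersetCard_zero, Finset.sum_singleton] at e1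
      change f.1 = 0
      funext σ
      have e2 := hg σ.1 σ.2.1 σ.2.2
      simp only [dif_pos σ.2, bd, Finset.powersetCard_zero, Finset.sum_singleton] at e2
      have : f.1 σ = f.1 ⟨σ.1, σ.2⟩ := rfl
      rw [this, e2, ← e1, hf0]; rfl
  have hsurj : LinearMap.range ev = ⊤ := by
    rw [LinearMap.range_eq_top]
    intro c
    refine ⟨⟨fun _ => c, ?_⟩, rfl⟩
    change coboundary G 0 _ = 0
    funext σ
    change ∑ τ ∈ _, _ = (0 : ZMod 2)
    have hc := σ.2.2
    have : ∀ τ ∈ Finset.powersetCard (0 + 1) σ.1,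
        (if h : IsSimplex G 0 τ then c else 0) = c := by
      intro τ hτ
      rw [Finset.mem_powersetCard] at hτ
      obtain ⟨x, rfl⟩ := Finset.card_eq_one.1 hτ.2
      have : IsSimplex G 0 {x} := ⟨sing x, by simp⟩
      rw [dif_pos this]
    rw [Finset.sum_congr rfl this, Finset.sum_const, Finset.card_powersetCard, hc]
    simp
    left; decide
  exact ⟨(Submodule.quotEquivOfEq _ _ hker).trans
    ((ev.quotKerEquivRange).trans ((LinearEquiv.ofEq _ _ hsurj).trans Submodule.topEquiv))⟩

lemma bd_insert [DecidableEq V] (i : ℕ) (F : Finset V → ZMod 2) {v : V} {σ : Finset V} (hv : v ∉ σ) :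
    bd (i + 1) F (insert v σ) = bd (i + 1) F σ + bd i (fun τ => F (insert v τ)) σ := by
  unfold bd
  rw [Finset.powersetCard_succ_insert hv, Finset.sum_union, Finset.sum_image]
  · intro a ha b hb hab
    rw [Finset.mem_coe, Finset.mem_powersetCard] at ha hb
    have h1 : v ∉ a := fun h => hv (ha.1 h)
    have h2 : v ∉ b := fun h => hv (hb.1 h)
    rw [← Finset.erase_insert h1, ← Finset.erase_insert h2]
    rw [show insert v a = insert v b from hab]
  · rw [Finset.disjoint_left]
    intro a ha hb
    rw [Finset.mem_powersetCard] at ha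
    obtain ⟨b, hb, rfl⟩ := Finset.mem_image.1 hb
    exact hv (ha.1 (Finset.mem_insert_self _ _))

lemma bd_self (F : Finset V → ZMod 2) {i : ℕ} {σ : Finset V} (h : σ.card = i) :
    bd i F σ = F σ := by
  unfold bd
  rw [← h, Finset.powersetCard_self, Finset.sum_singleton]

/-- The cone cochain at `v`. -/
noncomputable def cone [DecidableEq V] (v : V) (F : Finset V → ZMod 2) (τ : Finset V) : ZMod 2 :=
  if v ∈ τ then 0 else F (insert v τ)

lemma bd_cone_notMem [DecidableEq V] (v : V) (F : Finset V → ZMod 2) (i : ℕ) {σ : Finset V} (hv : v ∉ σ) :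
    bd i (cone v F) σ = bd i (fun τ => F (insert v τ)) σ := by
  refine Finset.sum_congr rfl fun τ hτ => ?_
  rw [Finset.mem_powersetCard] at hτ
  have : v ∉ τ := fun h => hv (hτ.1 h)
  simp [cone, this]

lemma bd_cone_mem [DecidableEq V] (v : V) (F : Finset V → ZMod 2) (i : ℕ) {σ : Finset V} (hv : v ∈ σ)
    (hc : σ.card = i + 1) :
    bd i (cone v F) σ = F σ := by
  obtain ⟨ρ, hρ, rfl⟩ : ∃ ρ, v ∉ ρ ∧ σ = insert v ρ :=
    ⟨σ.erase v, by simp, (Finset.insert_erase hv).symm⟩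
  rw [Finset.card_insert_of_notMem hρ] at hc
  cases i with
  | zero =>
    have : ρ = ∅ := Finset.card_eq_zero.1 (by omega)
    subst this
    simp [bd, cone]
  | succ i =>
    rw [bd_insert _ _ hρ, bd_self _ (by omega)]
    have : bd i (fun τ => cone v F (insert v τ)) ρ = 0 :=
      Finset.sum_eq_zero fun τ _ => by simp [cone]
    rw [this]; simp [cone, hρ]

lemma zmod2_add_self (a : ZMod 2) : a + a = 0 := CharTwo.add_self_eq_zero a

lemma complete_van [DecidableEq V] (v : V) (j : ℕ) (F : Finset V → ZMod 2)
    (h : ∀ R : Finset V, R.card = j + 2 → bd (j + 1) F R = 0) :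
    ∃ g : Finset V → ZMod 2, ∀ σ : Finset V, σ.card = j + 1 → F σ = bd j g σ := by
  refine ⟨cone v F, fun σ hσ => ?_⟩
  by_cases hv : v ∈ σ
  · rw [bd_cone_mem v F j hv hσ]
  · rw [bd_cone_notMem v F j hv]
    have := h (insert v σ) (by rw [Finset.card_insert_of_notMem hv, hσ])
    rw [bd_insert _ _ hv, bd_self _ hσ] at this
    exact CharTwo.add_eq_zero.1 this

lemma bd_bd [DecidableEq V] (i : ℕ) (F : Finset V → ZMod 2) (R : Finset V) (hR : R.card = i + 2) :
    bd (i + 1) (bd i F) R = 0 := by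
  unfold bd
  rw [Finset.sum_comm' (t' := Finset.powersetCard i R)
    (s' := fun τ => (R \ τ).image (fun x => insert x τ))]
  · refine Finset.sum_eq_zero fun τ hτ => ?_
    rw [Finset.mem_powersetCard] at hτ
    rw [Finset.sum_const, Finset.card_image_of_injOn, Finset.card_sdiff_of_subset hτ.1, hR, hτ.2]
    · simp; left; decide
    · intro a ha b hb hab
      simp only [Finset.coe_sdiff, Set.mem_sdiff, Finset.mem_coe] at ha hb
      have : a ∈ insert b τ := by rw [← show insert a τ = insert b τ from hab]; simp
      rcases Finset.mem_insert.1 this with h | h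
      · exact h
      · exact absurd h ha.2
  · intro σ τ
    simp only [Finset.mem_powersetCard, Finset.mem_image, Finset.mem_sdiff]
    constructor
    · rintro ⟨⟨h1, h2⟩, h3, h4⟩
      refine ⟨?_, h3.trans h1, h4⟩
      obtain ⟨x, hx, hx2⟩ := Finset.exists_mem_notMem_of_card_lt_card (s := τ) (t := σ) (by omega)
      refine ⟨x, ⟨h1 hx, hx2⟩, ?_⟩
      refine Finset.eq_of_subset_of_card_le ?_ ?_
      · exact Finset.insert_subset hx h3
      · rw [Finset.card_insert_of_notMem hx2]; omega
    · rintro ⟨⟨x, ⟨hx, hx2⟩, rfl⟩, h1, h2⟩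
      exact ⟨⟨Finset.insert_subset hx h1, by rw [Finset.card_insert_of_notMem hx2, h2]⟩,
        Finset.subset_insert _ _, h2⟩

/-! ### Consequences of the minimum degree condition -/

/-- Every `j`-set has at most `m` missing extensions. -/
def Good [Fintype V] [DecidableEq V] (G : Set (Finset V)) (j m : ℕ) : Prop :=
  ∀ B : Finset V, B.card = j →
    (Finset.univ.filter (fun a => a ∉ B ∧ insert a B ∉ G)).card ≤ m

lemma Good.exists_vertex [Fintype V] [DecidableEq V] {G : Set (Finset V)} {j m : ℕ}
    (h : Good G j m) (A K : Finset V) (hA : A.card = j + 1)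
    (hm : (j + 1) * m + K.card + (j + 1) < Fintype.card V) :
    ∃ v, v ∉ A ∧ v ∉ K ∧ ∀ B ∈ Finset.powersetCard j A, insert v B ∈ G := by
  by_contra hcon
  push Not at hcon
  have hsub : (Finset.univ : Finset V) ⊆ (A ∪ K) ∪ (Finset.powersetCard j A).biUnion
      (fun B => Finset.univ.filter (fun a => a ∉ B ∧ insert a B ∉ G)) := by
    intro v _
    by_cases h1 : v ∈ A
    · simp [h1]
    by_cases h2 : v ∈ K
    · simp [h2]
    obtain ⟨B, hB, hB2⟩ := hcon v h1 h2
    refine Finset.mem_union_right _ (Finset.mem_biUnion.2 ⟨B, hB, ?_⟩)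
    rw [Finset.mem_powersetCard] at hB
    simp only [Finset.mem_filter, Finset.mem_univ, true_and]
    exact ⟨fun hh => h1 (hB.1 hh), hB2⟩
  have h1 := Finset.card_le_card hsub
  have h2 : ((Finset.powersetCard j A).biUnion
      (fun B => Finset.univ.filter (fun a => a ∉ B ∧ insert a B ∉ G))).card ≤ (j + 1) * m := by
    refine (Finset.card_biUnion_le_card_mul _ _ m ?_).trans ?_
    · intro B hB
      exact h B (Finset.mem_powersetCard.1 hB).2
    · rw [Finset.card_powersetCard, hA]; simp
  have h3 := Finset.card_union_le (A ∪ K) ((Finset.powersetCard j A).biUnion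
      (fun B => Finset.univ.filter (fun a => a ∉ B ∧ insert a B ∉ G)))
  have h4 := Finset.card_union_le A K
  rw [Finset.card_univ] at h1
  omega

lemma Good.mem [Fintype V] [DecidableEq V] {G : Set (Finset V)} {j m : ℕ}
    (h : Good G j m) (down : ∀ A ∈ G, ∀ B, B ⊆ A → B.Nonempty → B ∈ G)
    (hm : (j + 1) * m + (j + 1) < Fintype.card V) (A : Finset V) (hA : A.Nonempty)
    (hc : A.card ≤ j) : A ∈ G := by
  obtain ⟨A', hA', -, hc'⟩ := Finset.exists_subsuperset_card_eq (s := A) (t := Finset.univ) (n := j + 1)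
    (Finset.subset_univ _) (by omega) (by rw [Finset.card_univ]; nlinarith)
  obtain ⟨B, hAB, hBA, hB⟩ := Finset.exists_subsuperset_card_eq hA' hc (by omega)
  obtain ⟨v, h1, -, h3⟩ := h.exists_vertex A' ∅ hc' (by simpa using hm)
  exact down _ (h3 B (Finset.mem_powersetCard.2 ⟨hBA, hB⟩)) _
    (hAB.trans (Finset.subset_insert _ _)) hA

lemma Good.van_lt [Fintype V] [DecidableEq V] {G : Set (Finset V)} {j m : ℕ}
    (h : Good G j m) (down : ∀ A ∈ G, ∀ B, B ⊆ A → B.Nonempty → B ∈ G)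
    (hm : (j + 1) * m + (j + 1) < Fintype.card V) (i : ℕ) (hi : i < j) : Van G i := by
  intro F hF
  have : Nonempty V := Fintype.card_pos_iff.1 (by omega)
  obtain ⟨v⟩ := this
  have key : ∀ R : Finset V, R.card = i + 2 → bd (i + 1) F R = 0 := by
    intro R hR
    by_cases hij : i + 2 ≤ j
    · exact hF R (h.mem down hm R (Finset.card_pos.1 (by omega)) (by omega)) hR
    · have : j = i + 1 := by omega
      subst this
      obtain ⟨v, h1, -, h3⟩ := h.exists_vertex R ∅ hR (by simpa using hm)
      have e := bd_bd (i + 1) F (insert v R) (by rw [Finset.card_insert_of_notMem h1, hR])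
      rw [bd_insert _ _ h1, bd_self _ hR] at e
      have : bd (i + 1) (fun τ => bd (i + 1) F (insert v τ)) R = 0 := by
        refine Finset.sum_eq_zero fun τ hτ => ?_
        have := Finset.mem_powersetCard.1 hτ
        refine hF _ (h3 τ hτ) ?_
        rw [Finset.card_insert_of_notMem (fun hh => h1 (this.1 hh)), this.2]
      rw [this, add_zero] at e
      exact e
  obtain ⟨g, hg⟩ := complete_van v i F key
  exact ⟨g, fun σ _ hσ => hg σ hσ⟩

lemma even_card_between [DecidableEq V] {j : ℕ} (R τ : Finset V) (hR : R.card = j + 2)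
    (hτ : τ.card = j) :
    Even ((Finset.powersetCard (j + 1) R).filter (fun σ => τ ⊆ σ)).card := by
  have e := bd_bd j (fun τ' => if τ' = τ then 1 else 0) R hR
  unfold bd at e
  rw [← ZMod.natCast_eq_zero_iff_even, Finset.card_filter, ← e]
  push_cast
  refine Finset.sum_congr rfl fun σ _ => ?_
  rw [Finset.sum_ite_eq']
  simp [Finset.mem_powersetCard, hτ]

lemma Good.isMj [Fintype V] [DecidableEq V] {G : Set (Finset V)} {k j m : ℕ}
    (h : Good G j m) (down : ∀ A ∈ G, ∀ B, B ⊆ A → B.Nonempty → B ∈ G)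
    (hjk : j < k)
    (hm : (j + 1) * m + (k + 1) + (j + 1) < Fintype.card V) {K C : Finset V}
    (hM : IsMjMinus G k j K C) : ∃ J, IsMj G k j K C J := by
  obtain ⟨hK, hC, hCc, hCK, hP⟩ := hM
  obtain ⟨w, hwK, hwC⟩ := Finset.exists_mem_notMem_of_card_lt_card (s := C) (t := K) (by
    have := hK.2; omega)
  have hA : (insert w C).card = j + 1 := by rw [Finset.card_insert_of_notMem hwC, hCc]
  have hAK : insert w C ⊆ K := Finset.insert_subset hwK hCK
  obtain ⟨a, h1, h2, h3⟩ := h.exists_vertex (insert w C) K hA (by rw [hK.2]; exact hm)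
  refine ⟨Finset.powersetCard (j + 1) (insert a (insert w C)), ⟨hK, hC, hCc, hCK, hP⟩, ⟨?_, ?_⟩, ?_⟩
  · intro σ hσ
    rw [Finset.mem_powersetCard] at hσ
    refine ⟨?_, hσ.2⟩
    by_cases ha : a ∈ σ
    · have := h3 (σ.erase a) (Finset.mem_powersetCard.2 ⟨?_, ?_⟩)
      · rwa [Finset.insert_erase ha] at this
      · rw [← Finset.subset_insert_iff]; exact hσ.1
      · rw [Finset.card_erase_of_mem ha, hσ.2]; simp
    · have : σ ⊆ insert w C := (Finset.subset_insert_iff_of_notMem ha).1 hσ.1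
      exact down _ hK.1 _ (this.trans hAK) (Finset.card_pos.1 (by omega))
  · intro τ hτ
    convert even_card_between (insert a (insert w C)) τ
      (by rw [Finset.card_insert_of_notMem h1, hA]) hτ
  · refine ⟨insert w C, ⟨Finset.mem_powersetCard.2 ⟨Finset.subset_insert _ _, hA⟩,
      w, Finset.mem_sdiff.2 ⟨hwK, hwC⟩, by congr⟩, ?_⟩
    rintro P ⟨hP1, w', hw', rfl⟩
    rw [Finset.mem_sdiff] at hw'
    have := (Finset.mem_powersetCard.1 hP1).1 (Finset.mem_insert_self w' C)
    simp only [Finset.mem_insert] at this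
    rcases this with rfl | rfl | h
    · exact absurd hw'.1 h2
    · congr
    · exact absurd h hw'.2


/-! ### The random complex -/

lemma complexAt_down {k n : ℕ} {t : Finset (Fin n) → ℝ} {p : ℝ} :
    ∀ A ∈ complexAt k n t p, ∀ B, B ⊆ A → B.Nonempty → B ∈ complexAt k n t p := by
  rintro A (⟨v, rfl⟩ | ⟨hA, K, hK, ht, hAK⟩) B hB hne
  · left
    refine ⟨v, ?_⟩
    rcases Finset.subset_singleton_iff.1 hB with h | h
    · exact absurd h hne.ne_empty
    · exact h
  · exact Or.inr ⟨hne, K, hK, ht, hB.trans hAK⟩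

lemma complexAt_sing {k n : ℕ} {t : Finset (Fin n) → ℝ} {p : ℝ} (v : Fin n) :
    ({v} : Finset (Fin n)) ∈ complexAt k n t p := Or.inl ⟨v, rfl⟩

lemma complexAt_mono {k n : ℕ} {t : Finset (Fin n) → ℝ} {p p' : ℝ} (h : p ≤ p') :
    complexAt k n t p ⊆ complexAt k n t p' := by
  rintro A (hA | ⟨hA, K, hK, ht, hAK⟩)
  · exact Or.inl hA
  · exact Or.inr ⟨hA, K, hK, ht.trans h, hAK⟩

lemma mem_complexAt {k n : ℕ} {t : Finset (Fin n) → ℝ} {p : ℝ} {A : Finset (Fin n)}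
    (hA : 2 ≤ A.card) :
    A ∈ complexAt k n t p ↔ ∃ K : Finset (Fin n), K.card = k + 1 ∧ t K ≤ p ∧ A ⊆ K := by
  constructor
  · rintro (⟨v, rfl⟩ | ⟨-, h⟩)
    · simp at hA
    · exact h
  · intro h
    exact Or.inr ⟨Finset.card_pos.1 (by omega), h⟩

lemma isSimplex_complexAt {k n : ℕ} {t : Finset (Fin n) → ℝ} {p : ℝ} {K : Finset (Fin n)}
    (hk : 1 ≤ k) : IsSimplex (complexAt k n t p) k K ↔ K.card = k + 1 ∧ t K ≤ p := by
  constructor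
  · rintro ⟨h, hc⟩
    obtain ⟨K', h1, h2, h3⟩ := (mem_complexAt (by omega)).1 h
    have : K = K' := Finset.eq_of_subset_of_card_le h3 (by omega)
    subst this
    exact ⟨hc, h2⟩
  · rintro ⟨h1, h2⟩
    exact ⟨(mem_complexAt (by omega)).2 ⟨K, h1, h2, subset_rfl⟩, h1⟩

/-! ### Minimal obstructions -/

section obst
variable {n : ℕ}

/-- Number of members of `S` inside `R`. -/
def cnt (S : Finset (Finset (Fin n))) (R : Finset (Fin n)) : ℕ := (S.filter (fun σ => σ ⊆ R)).card

/-- The sets with odd coboundary. -/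
noncomputable def oddR (j : ℕ) (S : Finset (Finset (Fin n))) : Finset (Finset (Fin n)) :=
  (Finset.powersetCard (j + 2) Finset.univ).filter (fun R => Odd (cnt S R))

/-- Indicator of `S`. -/
noncomputable def ind (S : Finset (Finset (Fin n))) (σ : Finset (Fin n)) : ZMod 2 :=
  if σ ∈ S then 1 else 0

/-- Supports of cocycles. -/
structure Obst (G : Set (Finset (Fin n))) (j : ℕ) (S : Finset (Finset (Fin n))) : Prop where
  simp : ∀ σ ∈ S, σ ∈ G ∧ σ.card = j + 1
  even : ∀ R ∈ G, R.card = j + 2 → Even (cnt S R)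

/-- Supports of non-coboundaries. -/
def NC (G : Set (Finset (Fin n))) (j : ℕ) (S : Finset (Finset (Fin n))) : Prop :=
  ¬ ∃ g : Finset (Fin n) → ZMod 2, ∀ σ ∈ G, σ.card = j + 1 → ind S σ = bd j g σ

lemma bd_ind {j : ℕ} {S : Finset (Finset (Fin n))} (hS : ∀ σ ∈ S, σ.card = j) (R : Finset (Fin n)) :
    bd j (ind S) R = (cnt S R : ZMod 2) := by
  unfold bd ind cnt
  rw [Finset.sum_boole]
  congr 2
  ext σ
  simp only [Finset.mem_filter, Finset.mem_powersetCard]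
  constructor
  · rintro ⟨⟨h1, h2⟩, h3⟩; exact ⟨h3, h1⟩
  · rintro ⟨h3, h1⟩; exact ⟨⟨h1, hS _ h3⟩, h3⟩

lemma bd_add (j : ℕ) (F F' : Finset V → ZMod 2) (R : Finset V) :
    bd j (fun σ => F σ + F' σ) R = bd j F R + bd j F' R := Finset.sum_add_distrib

lemma zmod2_cases (a : ZMod 2) : a = 0 ∨ a = 1 := by
  revert a; decide

lemma obst_of_fun {G : Set (Finset (Fin n))} {j : ℕ}
    (down : ∀ A ∈ G, ∀ B, B ⊆ A → B.Nonempty → B ∈ G)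
    {F : Finset (Fin n) → ZMod 2} (hF : ∀ R ∈ G, R.card = j + 2 → bd (j + 1) F R = 0)
    (hn : ¬ ∃ g : Finset (Fin n) → ZMod 2, ∀ σ ∈ G, σ.card = j + 1 → F σ = bd j g σ) :
    Obst G j (Finset.univ.filter (fun σ => (σ ∈ G ∧ σ.card = j + 1) ∧ F σ = 1)) ∧
    NC G j (Finset.univ.filter (fun σ => (σ ∈ G ∧ σ.card = j + 1) ∧ F σ = 1)) := by
  set S : Finset (Finset (Fin n)) :=
    Finset.univ.filter (fun σ => (σ ∈ G ∧ σ.card = j + 1) ∧ F σ = 1) with hS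
  have hmem : ∀ σ, σ ∈ S ↔ (σ ∈ G ∧ σ.card = j + 1) ∧ F σ = 1 := by simp [hS]
  have heq : ∀ σ ∈ G, σ.card = j + 1 → F σ = ind S σ := by
    intro σ h1 h2
    unfold ind
    rcases zmod2_cases (F σ) with h | h
    · rw [if_neg, h]
      rw [hmem, h]; simp
    · rw [if_pos, h]
      exact (hmem _).2 ⟨⟨h1, h2⟩, h⟩
  refine ⟨⟨fun σ hσ => ((hmem σ).1 hσ).1, ?_⟩, ?_⟩
  · intro R hR hc
    rw [← ZMod.natCast_eq_zero_iff_even, ← bd_ind (fun σ hσ => ((hmem σ).1 hσ).1.2), ← hF R hR hc]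
    refine Finset.sum_congr rfl fun σ hσ => ?_
    rw [Finset.mem_powersetCard] at hσ
    exact (heq σ (down R hR σ hσ.1 (Finset.card_pos.1 (by omega))) hσ.2).symm
  · rintro ⟨g, hg⟩
    exact hn ⟨g, fun σ h1 h2 => (heq σ h1 h2).trans (hg σ h1 h2)⟩

lemma exists_min_obst {G : Set (Finset (Fin n))} {j : ℕ}
    (down : ∀ A ∈ G, ∀ B, B ⊆ A → B.Nonempty → B ∈ G) (h : ¬ Van G j) :
    ∃ S, Obst G j S ∧ NC G j S ∧ ∀ S', Obst G j S' → NC G j S' → S.card ≤ S'.card := by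
  unfold Van at h
  push Not at h
  obtain ⟨F, hF, hn⟩ := h
  have h0 := obst_of_fun down hF (by push Not; exact hn)
  obtain ⟨S, hS, hmin⟩ := Finset.exists_min_image
    (Finset.univ.filter (fun S : Finset (Finset (Fin n)) => Obst G j S ∧ NC G j S)) Finset.card
    ⟨_, Finset.mem_filter.2 ⟨Finset.mem_univ _, h0⟩⟩
  refine ⟨S, (Finset.mem_filter.1 hS).2.1, (Finset.mem_filter.1 hS).2.2, fun S' h1 h2 => ?_⟩
  exact hmin S' (Finset.mem_filter.2 ⟨Finset.mem_univ _, h1, h2⟩)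

lemma expansion {G : Set (Finset (Fin n))} {j : ℕ}
    (down : ∀ A ∈ G, ∀ B, B ⊆ A → B.Nonempty → B ∈ G) {S : Finset (Finset (Fin n))}
    (hS : Obst G j S) (hN : NC G j S)
    (hmin : ∀ S', Obst G j S' → NC G j S' → S.card ≤ S'.card) :
    n * S.card ≤ (j + 2) * (oddR j S).card := by
  have hSc : ∀ σ ∈ S, σ.card = j + 1 := fun σ hσ => (hS.simp σ hσ).2
  have step : ∀ v : Fin n, S.card ≤ ((oddR j S).filter (fun R => v ∈ R)).card := by
    intro v
    obtain ⟨h1, h2⟩ := obst_of_fun (G := G) (j := j) down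
      (F := fun σ => ind S σ + bd j (cone v (ind S)) σ) (by
        intro R hR hc
        rw [bd_add, bd_bd _ _ _ hc, add_zero, bd_ind hSc, ZMod.natCast_eq_zero_iff_even]
        exact hS.even R hR hc) (by
        rintro ⟨g, hg⟩
        refine hN ⟨fun σ => g σ + cone v (ind S) σ, fun σ h1 h2 => ?_⟩
        rw [bd_add, ← hg σ h1 h2, add_assoc, zmod2_add_self, add_zero])
    refine (hmin _ h1 h2).trans ?_
    refine Finset.card_le_card_of_injOn (fun σ => insert v σ) ?_ ?_
    · intro σ hσ
      simp only [Finset.coe_filter, Finset.mem_univ, true_and, Set.mem_ofPred_eq] at hσ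
      obtain ⟨⟨h1, h2⟩, h3⟩ := hσ
      have hv : v ∉ σ := by
        intro hv
        rw [bd_cone_mem v _ j hv h2, zmod2_add_self] at h3
        exact absurd h3 (by decide)
      rw [bd_cone_notMem v _ j hv] at h3
      have h4 := bd_insert j (ind S) hv
      rw [bd_self _ h2, h3, bd_ind hSc] at h4
      simp only [Finset.coe_filter, Set.mem_ofPred_eq, oddR, Finset.mem_filter,
        Finset.mem_powersetCard, Finset.subset_univ, true_and]
      refine ⟨⟨by rw [Finset.card_insert_of_notMem hv, h2], ?_⟩, Finset.mem_insert_self _ _⟩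
      rw [← ZMod.natCast_eq_one_iff_odd]
      exact h4
    · intro a ha b hb hab
      have key : ∀ σ ∈ (Finset.univ.filter (fun σ => (σ ∈ G ∧ σ.card = j + 1) ∧
          ind S σ + bd j (cone v (ind S)) σ = 1)), v ∉ σ := by
        intro σ hσ hv
        obtain ⟨⟨h1, h2⟩, h3⟩ := (Finset.mem_filter.1 hσ).2
        rw [bd_cone_mem v _ j hv h2, zmod2_add_self] at h3
        exact absurd h3 (by decide)
      rw [← Finset.erase_insert (key a ha), ← Finset.erase_insert (key b hb)]
      rw [show insert v a = insert v b from hab]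
  have h1 : ∑ v : Fin n, S.card ≤ ∑ v : Fin n, ((oddR j S).filter (fun R => v ∈ R)).card :=
    Finset.sum_le_sum fun v _ => step v
  rw [Finset.sum_const, Finset.card_univ, Fintype.card_fin, smul_eq_mul] at h1
  refine h1.trans (le_of_eq ?_)
  simp only [Finset.card_filter]
  rw [Finset.sum_comm]
  rw [mul_comm, ← smul_eq_mul, ← Finset.sum_const]
  refine Finset.sum_congr rfl fun R hR => ?_
  have : R.card = j + 2 := (Finset.mem_powersetCard.1 (Finset.mem_filter.1 hR).1).2
  rw [← Finset.card_filter]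
  simp [this]

lemma traversal {k : ℕ} {t : Finset (Fin n) → ℝ} {p : ℝ} {j : ℕ} {S : Finset (Finset (Fin n))}
    (hS : Obst (complexAt k n t p) j S) (hN : NC (complexAt k n t p) j S)
    (hmin : ∀ S', Obst (complexAt k n t p) j S' → NC (complexAt k n t p) j S' → S.card ≤ S'.card)
    (U : Finset (Finset (Fin n))) (hU : U ⊆ S) (hne : U.Nonempty) (hne' : U ≠ S) :
    ∃ K : Finset (Fin n), K.card = k + 1 ∧ t K ≤ p ∧ (∃ σ ∈ U, σ ⊆ K) ∧
      ∃ σ ∈ S, σ ∉ U ∧ σ ⊆ K := by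
  by_contra hcon
  push Not at hcon
  have hss : U ⊂ S := lt_of_le_of_ne hU hne'
  have hUc := Finset.card_lt_card hss
  have hdc : (S \ U).card < S.card := by
    have := hne.card_pos
    rw [Finset.card_sdiff_of_subset hU]; omega
  have hadd : ∀ R, cnt U R + cnt (S \ U) R = cnt S R := by
    intro R
    unfold cnt
    rw [← Finset.card_union_of_disjoint, ← Finset.filter_union, Finset.union_sdiff_of_subset hU]
    exact Finset.disjoint_filter_filter Finset.disjoint_sdiff
  have hdich : ∀ R ∈ complexAt k n t p, R.card = j + 2 → cnt U R = 0 ∨ cnt (S \ U) R = 0 := by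
    intro R hR hc
    obtain ⟨K, h1, h2, h3⟩ := (mem_complexAt (by omega)).1 hR
    by_contra h0
    push Not at h0
    obtain ⟨σ, hσ⟩ := Finset.card_pos.1 (Nat.pos_of_ne_zero h0.1)
    obtain ⟨σ', hσ'⟩ := Finset.card_pos.1 (Nat.pos_of_ne_zero h0.2)
    rw [Finset.mem_filter] at hσ hσ'
    have := hcon K h1 h2 ⟨σ, hσ.1, hσ.2.trans h3⟩ σ' (Finset.mem_sdiff.1 hσ'.1).1
      (Finset.mem_sdiff.1 hσ'.1).2
    exact this (hσ'.2.trans h3)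
  have hO1 : Obst (complexAt k n t p) j U := by
    refine ⟨fun σ hσ => hS.simp σ (hU hσ), fun R hR hc => ?_⟩
    have h2 := hS.even R hR hc
    rcases hdich R hR hc with h | h
    · rw [h]; exact Even.zero
    · rw [← hadd, h, add_zero] at h2; exact h2
  have hO2 : Obst (complexAt k n t p) j (S \ U) := by
    refine ⟨fun σ hσ => hS.simp σ (Finset.mem_sdiff.1 hσ).1, fun R hR hc => ?_⟩
    have h2 := hS.even R hR hc
    rcases hdich R hR hc with h | h
    · rw [← hadd, h, zero_add] at h2; exact h2
    · rw [h]; exact Even.zero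
  have hc1 : ¬ NC (complexAt k n t p) j U := fun h => by
    have := hmin _ hO1 h; omega
  have hc2 : ¬ NC (complexAt k n t p) j (S \ U) := fun h => by
    have := hmin _ hO2 h; omega
  unfold NC at hc1 hc2
  rw [not_not] at hc1 hc2
  obtain ⟨g1, hg1⟩ := hc1
  obtain ⟨g2, hg2⟩ := hc2
  refine hN ⟨fun σ => g1 σ + g2 σ, fun σ h1 h2 => ?_⟩
  rw [bd_add, ← hg1 σ h1 h2, ← hg2 σ h1 h2]
  unfold ind
  by_cases ha : σ ∈ U
  · simp [ha, hU ha]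
  · simp [ha]

lemma card_in_simplex {k : ℕ} {t : Finset (Fin n) → ℝ} {p : ℝ} {j : ℕ}
    {S : Finset (Finset (Fin n))}
    (hS : Obst (complexAt k n t p) j S) {K σ : Finset (Fin n)} (hK : K.card = k + 1)
    (ht : t K ≤ p) (hσ : σ ∈ S) (hσK : σ ⊆ K) :
    k - j + 1 ≤ ((S.filter (fun σ' => σ' ⊆ K)).filter (fun σ' => (σ ∪ σ').card ≤ j + 2)).card := by
  have hσc := (hS.simp σ hσ).2
  have hex : ∀ w ∈ K \ σ, ∃ σ' ∈ S, σ' ⊆ insert w σ ∧ w ∈ σ' := by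
    intro w hw
    rw [Finset.mem_sdiff] at hw
    have hR : insert w σ ∈ complexAt k n t p := (mem_complexAt (by
      rw [Finset.card_insert_of_notMem hw.2]; omega)).2
      ⟨K, hK, ht, Finset.insert_subset hw.1 hσK⟩
    have he := hS.even _ hR (by rw [Finset.card_insert_of_notMem hw.2, hσc])
    by_contra hcon
    push Not at hcon
    have : S.filter (fun σ' => σ' ⊆ insert w σ) = {σ} := by
      ext σ'
      simp only [Finset.mem_filter, Finset.mem_singleton]
      constructor
      · rintro ⟨h1, h2⟩
        have := hcon σ' h1 h2
        exact Finset.eq_of_subset_of_card_le ((Finset.subset_insert_iff_of_notMem this).1 h2)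
          (by rw [hσc, (hS.simp σ' h1).2])
      · rintro rfl
        exact ⟨hσ, Finset.subset_insert _ _⟩
    rw [cnt, this] at he
    simp at he
  choose! f hf1 hf2 hf3 using hex
  have hinj : Set.InjOn f (K \ σ : Finset (Fin n)) := by
    intro a ha b hb hab
    have h1 := hf3 a ha
    rw [hab] at h1
    rcases Finset.mem_insert.1 (hf2 b hb h1) with h | h
    · exact h
    · exact absurd h (Finset.mem_sdiff.1 ha).2
  have hsub : insert σ ((K \ σ).image f) ⊆
      (S.filter (fun σ' => σ' ⊆ K)).filter (fun σ' => (σ ∪ σ').card ≤ j + 2) := by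
    intro σ' h
    rw [Finset.mem_filter, Finset.mem_filter]
    rcases Finset.mem_insert.1 h with rfl | h
    · refine ⟨⟨hσ, hσK⟩, by rw [Finset.union_self]; omega⟩
    · obtain ⟨w, hw, rfl⟩ := Finset.mem_image.1 h
      have hw' := Finset.mem_sdiff.1 hw
      refine ⟨⟨hf1 w hw, (hf2 w hw).trans (Finset.insert_subset hw'.1 hσK)⟩, ?_⟩
      have : σ ∪ f w ⊆ insert w σ := Finset.union_subset (Finset.subset_insert _ _) (hf2 w hw)
      refine (Finset.card_le_card this).trans ?_
      rw [Finset.card_insert_of_notMem hw'.2, hσc]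
  refine le_trans (le_of_eq ?_) (Finset.card_le_card hsub)
  rw [Finset.card_insert_of_notMem, Finset.card_image_of_injOn hinj,
    Finset.card_sdiff_of_subset hσK, hK, hσc]
  · omega
  · intro h
    obtain ⟨w, hw, h2⟩ := Finset.mem_image.1 h
    have := hf3 w hw
    rw [h2] at this
    exact (Finset.mem_sdiff.1 hw).2 this

/-- Small cocycles are flowers. -/
lemma flower_of_small {k : ℕ} {t : Finset (Fin n) → ℝ} {p : ℝ} {j : ℕ} (hj : 1 ≤ j) (hjk : j < k)
    {S : Finset (Finset (Fin n))}
    (hS : Obst (complexAt k n t p) j S) (hne : S.Nonempty) (hc : S.card ≤ k - j + 1) :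
    ∃ K C, IsMjMinus (complexAt k n t p) k j K C := by
  obtain ⟨σ, hσ⟩ := hne
  have hσc := (hS.simp σ hσ).2
  obtain ⟨K, hK, ht, hσK⟩ := (mem_complexAt (by omega)).1 (hS.simp σ hσ).1
  -- everything lies in any simplex containing a member, with pairwise small unions
  have key : ∀ K' σ', K'.card = k + 1 → t K' ≤ p → σ' ∈ S → σ' ⊆ K' →
      ∀ τ ∈ S, τ ⊆ K' ∧ (σ' ∪ τ).card ≤ j + 2 := by
    intro K' σ' h1 h2 h3 h4 τ hτ
    have h5 := card_in_simplex hS h1 h2 h3 h4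
    have h6 : ((S.filter (fun σ'' => σ'' ⊆ K')).filter (fun σ'' => (σ' ∪ σ'').card ≤ j + 2)) = S :=
      Finset.eq_of_subset_of_card_le ((Finset.filter_subset _ _).trans (Finset.filter_subset _ _))
        (hc.trans h5)
    rw [← h6, Finset.mem_filter, Finset.mem_filter] at hτ
    exact ⟨hτ.1.2, hτ.2⟩
  have hSK : ∀ τ ∈ S, τ ⊆ K := fun τ hτ => (key K σ hK ht hσ hσK τ hτ).1
  have hpair : ∀ τ ∈ S, ∀ τ' ∈ S, (τ ∪ τ').card ≤ j + 2 := fun τ hτ τ' hτ' =>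
    (key K τ hK ht hτ (hSK τ hτ) τ' hτ').2
  -- for every vertex outside sigma there is a unique neighbour
  have hex : ∀ w ∈ K, w ∉ σ → ∃ u ∈ σ, insert w (σ.erase u) ∈ S := by
    intro w hwK hwσ
    have hR : insert w σ ∈ complexAt k n t p := (mem_complexAt (by
      rw [Finset.card_insert_of_notMem hwσ]; omega)).2
      ⟨K, hK, ht, Finset.insert_subset hwK hσK⟩
    have he := hS.even _ hR (by rw [Finset.card_insert_of_notMem hwσ, hσc])
    by_contra hcon
    push Not at hcon
    have : S.filter (fun σ' => σ' ⊆ insert w σ) = {σ} := by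
      ext σ'
      simp only [Finset.mem_filter, Finset.mem_singleton]
      constructor
      · rintro ⟨h1, h2⟩
        have hc' := (hS.simp σ' h1).2
        by_contra hne
        obtain ⟨u, hu, hu'⟩ : ∃ u ∈ σ, u ∉ σ' := by
          by_contra h0
          push Not at h0
          exact hne (Finset.eq_of_subset_of_card_le h0 (by omega)).symm
        refine hcon u hu ?_
        have : σ' = insert w (σ.erase u) := by
          refine Finset.eq_of_subset_of_card_le ?_ ?_
          · intro x hx
            rcases Finset.mem_insert.1 (h2 hx) with h | h
            · simp [h]
            · refine Finset.mem_insert_of_mem (Finset.mem_erase.2 ⟨?_, h⟩)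
              rintro rfl; exact hu' hx
          · refine (Finset.card_insert_le _ _).trans ?_
            rw [Finset.card_erase_of_mem hu, hσc, hc']; simp
        rw [← this]; exact h1
      · rintro rfl
        exact ⟨hσ, Finset.subset_insert _ _⟩
    rw [cnt, this] at he
    simp at he
  obtain ⟨w0, hw0K, hw0⟩ := Finset.exists_mem_notMem_of_card_lt_card (s := σ) (t := K) (by omega)
  obtain ⟨u, hu, hu2⟩ := hex w0 hw0K hw0
  have hall : ∀ w ∈ K, w ∉ σ → insert w (σ.erase u) ∈ S := by
    intro w hwK hwσ
    by_cases hww : w = w0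
    · rw [hww]; exact hu2
    obtain ⟨u', hu', hu'2⟩ := hex w hwK hwσ
    by_cases huu : u' = u
    · rw [← huu]; exact hu'2
    exfalso
    have h1 := hpair _ hu2 _ hu'2
    have hsub : insert w (insert w0 σ) ⊆ insert w0 (σ.erase u) ∪ insert w (σ.erase u') := by
      intro x hx
      simp only [Finset.mem_insert, Finset.mem_union, Finset.mem_erase] at hx ⊢
      rcases hx with h | h | h
      · exact Or.inr (Or.inl h)
      · exact Or.inl (Or.inl h)
      · by_cases hxu : x = u
        · right; right; exact ⟨by rw [hxu]; exact fun h => huu h.symm, h⟩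
        · left; right; exact ⟨hxu, h⟩
    have h2 := Finset.card_le_card hsub
    rw [Finset.card_insert_of_notMem (by simp [hww, hwσ]), Finset.card_insert_of_notMem hw0, hσc] at h2
    omega
  have hCK : σ.erase u ⊆ K := (Finset.erase_subset _ _).trans hσK
  have hCc : (σ.erase u).card = j := by rw [Finset.card_erase_of_mem hu, hσc]; simp
  have hpet : ∀ w ∈ K, w ∉ σ.erase u → insert w (σ.erase u) ∈ S := by
    intro w hwK hw
    by_cases hwσ : w ∈ σ
    · have : w = u := by
        by_contra h; exact hw (Finset.mem_erase.2 ⟨h, hwσ⟩)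
      rw [this, Finset.insert_erase hu]; exact hσ
    · exact hall w hwK hwσ
  refine ⟨K, σ.erase u, (isSimplex_complexAt (by omega)).2 ⟨hK, ht⟩, ?_, hCc, hCK, ?_⟩
  · exact complexAt_down _ (hS.simp σ hσ).1 _ (Finset.erase_subset _ _) (Finset.card_pos.1 (by omega))
  · rintro P ⟨w, hw, rfl⟩ K' hK' hPK'
    rw [isSimplex_complexAt (by omega)] at hK'
    rw [Finset.mem_sdiff] at hw
    have hPS := hpet w hw.1 hw.2
    have hSK' : ∀ τ ∈ S, τ ⊆ K' := fun τ hτ => (key K' _ hK'.1 hK'.2 hPS hPK' τ hτ).1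
    symm
    refine Finset.eq_of_subset_of_card_le ?_ (by rw [hK, hK'.1])
    intro x hx
    by_cases hxC : x ∈ σ.erase u
    · exact hPK' (Finset.mem_insert_of_mem hxC)
    · exact hSK' _ (hpet x hx hxC) (Finset.mem_insert_self _ _)

end obst


/-! ### Certificates -/

section cert
variable {n : ℕ}

/-- Connectedness of a family of simplices, in cut form, with root `K0`. -/
def RootConn (j : ℕ) (T : Finset (Finset (Fin n))) (K0 : Finset (Fin n)) : Prop :=
  K0 ∈ T ∧ ∀ U ⊆ T, K0 ∈ U → U ≠ T → ∃ K ∈ U, ∃ K' ∈ T, K' ∉ U ∧ j + 1 ≤ (K ∩ K').card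

lemma RootConn.insert {j : ℕ} {T : Finset (Finset (Fin n))} {K0 K1 K : Finset (Fin n)}
    (h : RootConn j T K0) (hK1 : K1 ∈ T) (hK : K ∉ T) (hc : j + 1 ≤ (K1 ∩ K).card) :
    RootConn j (insert K T) K0 := by
  refine ⟨Finset.mem_insert_of_mem h.1, ?_⟩
  intro U hU h0 hne
  by_cases hKU : K ∈ U
  · have h1 : U.erase K ⊆ T := by
      rw [← Finset.subset_insert_iff]; exact hU
    have h2 : U.erase K ≠ T := by
      intro h2
      apply hne
      rw [← h2, Finset.insert_erase hKU]
    obtain ⟨A, hA, B, hB, hBU, hAB⟩ := h.2 _ h1 (Finset.mem_erase.2 ⟨by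
      rintro rfl; exact hK h.1, h0⟩) h2
    refine ⟨A, Finset.mem_of_mem_erase hA, B, Finset.mem_insert_of_mem hB, ?_, hAB⟩
    intro hb
    exact hBU (Finset.mem_erase.2 ⟨by rintro rfl; exact hK hB, hb⟩)
  · have h1 : U ⊆ T := (Finset.subset_insert_iff_of_notMem hKU).1 hU
    by_cases h2 : U = T
    · subst h2
      exact ⟨K1, hK1, K, Finset.mem_insert_self _ _, hKU, hc⟩
    · obtain ⟨A, hA, B, hB, hBU, hAB⟩ := h.2 U h1 h0 h2
      exact ⟨A, hA, B, Finset.mem_insert_of_mem hB, hBU, hAB⟩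

lemma exists_cert {k : ℕ} {t : Finset (Fin n) → ℝ} {p : ℝ} {j : ℕ} (hj : 1 ≤ j)
    {S : Finset (Finset (Fin n))} (hS : Obst (complexAt k n t p) j S) (hne : S.Nonempty)
    (htrav : ∀ U ⊆ S, U.Nonempty → U ≠ S →
      ∃ K : Finset (Fin n), K.card = k + 1 ∧ t K ≤ p ∧ (∃ σ ∈ U, σ ⊆ K) ∧
        ∃ σ ∈ S, σ ∉ U ∧ σ ⊆ K) :
    ∃ T K0, RootConn j T K0 ∧ (∀ K ∈ T, K.card = k + 1 ∧ t K ≤ p) ∧ T.card ≤ S.card ∧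
      ∀ σ ∈ S, ∃ K ∈ T, σ ⊆ K := by
  have main : ∀ i, 1 ≤ i → i ≤ S.card → ∃ T K0, RootConn j T K0 ∧
      (∀ K ∈ T, K.card = k + 1 ∧ t K ≤ p) ∧ T.card ≤ i ∧
      i ≤ (S.filter (fun σ => ∃ K ∈ T, σ ⊆ K)).card := by
    intro i hi
    induction i, hi using Nat.le_induction with
    | base =>
      intro _
      obtain ⟨σ, hσ⟩ := hne
      have hσc := (hS.simp σ hσ).2
      obtain ⟨K, hK, ht, hσK⟩ := (mem_complexAt (by omega)).1 (hS.simp σ hσ).1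
      refine ⟨{K}, K, ⟨Finset.mem_singleton_self _, ?_⟩, ?_, by simp, ?_⟩
      · intro U hU hKU hne
        exact absurd (Finset.Subset.antisymm hU (Finset.singleton_subset_iff.2 hKU)) hne
      · intro K' hK'
        rw [Finset.mem_singleton] at hK'
        subst hK'; exact ⟨hK, ht⟩
      · exact Finset.card_pos.2 ⟨σ, Finset.mem_filter.2 ⟨hσ, K, Finset.mem_singleton_self _, hσK⟩⟩
    | succ i hi ih =>
      intro hiS
      obtain ⟨T, K0, h1, h2, h3, h4⟩ := ih (by omega)
      set U := S.filter (fun σ => ∃ K ∈ T, σ ⊆ K) with hU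
      by_cases hUS : U = S
      · exact ⟨T, K0, h1, h2, by omega, by rw [← hU, hUS]; exact hiS⟩
      · obtain ⟨K, hK, ht, ⟨σ, hσU, hσK⟩, σ', hσ'S, hσ'U, hσ'K⟩ :=
          htrav U (Finset.filter_subset _ _) (Finset.card_pos.1 (by omega)) hUS
        obtain ⟨hσS, K1, hK1, hσK1⟩ := Finset.mem_filter.1 hσU
        have hKT : K ∉ T := fun hKT =>
          hσ'U (Finset.mem_filter.2 ⟨hσ'S, K, hKT, hσ'K⟩)
        refine ⟨insert K T, K0, h1.insert hK1 hKT ?_, ?_, ?_, ?_⟩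
        · rw [← (hS.simp σ hσS).2]
          exact Finset.card_le_card (Finset.subset_inter hσK1 hσK)
        · intro K' hK'
          rcases Finset.mem_insert.1 hK' with rfl | h
          · exact ⟨hK, ht⟩
          · exact h2 K' h
        · rw [Finset.card_insert_of_notMem hKT]; omega
        · have hsub : insert σ' U ⊆ S.filter (fun σ => ∃ K' ∈ insert K T, σ ⊆ K') := by
            intro x hx
            rcases Finset.mem_insert.1 hx with rfl | h
            · exact Finset.mem_filter.2 ⟨hσ'S, K, Finset.mem_insert_self _ _, hσ'K⟩
            · obtain ⟨hxS, K', hK', hx'⟩ := Finset.mem_filter.1 h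
              exact Finset.mem_filter.2 ⟨hxS, K', Finset.mem_insert_of_mem hK', hx'⟩
          have := Finset.card_le_card hsub
          rw [Finset.card_insert_of_notMem hσ'U] at this
          omega
  obtain ⟨T, K0, h1, h2, h3, h4⟩ := main S.card (Finset.card_pos.2 hne) le_rfl
  refine ⟨T, K0, h1, h2, h3, ?_⟩
  have : S.filter (fun σ => ∃ K ∈ T, σ ⊆ K) = S :=
    Finset.eq_of_subset_of_card_le (Finset.filter_subset _ _) h4
  intro σ hσ
  rw [← this] at hσ
  exact (Finset.mem_filter.1 hσ).2

/-! ### The measure of boxes -/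

instance instProbBase : IsProbabilityMeasure (volume.restrict (Set.Icc (0 : ℝ) 1)) :=
  ⟨by simp⟩

instance instProbBirth : IsProbabilityMeasure (birthMeasure n) := by
  unfold birthMeasure; infer_instance

/-- Box events. -/
def box (A B : Finset (Finset (Fin n))) (x y : ℝ) : Set (Finset (Fin n) → ℝ) :=
  {t | (∀ K ∈ A, t K ≤ x) ∧ ∀ K ∈ B, y < t K}

lemma measurableSet_box (A B : Finset (Finset (Fin n))) (x y : ℝ) : MeasurableSet (box A B x y) := by
  have : box A B x y = (⋂ K ∈ A, {t | t K ≤ x}) ∩ ⋂ K ∈ B, {t | y < t K} := by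
    ext t; simp [box]
  rw [this]
  refine MeasurableSet.inter ?_ ?_
  · exact Finset.measurableSet_biInter _ fun K _ => measurableSet_le (measurable_pi_apply K) measurable_const
  · exact Finset.measurableSet_biInter _ fun K _ => measurableSet_lt measurable_const (measurable_pi_apply K)

lemma base_Iic {x : ℝ} (h1 : x ≤ 1) :
    (volume.restrict (Set.Icc (0 : ℝ) 1)) (Set.Iic x) = ENNReal.ofReal x := by
  rw [Measure.restrict_apply measurableSet_Iic]
  have : Set.Iic x ∩ Set.Icc (0 : ℝ) 1 = Set.Icc 0 x := by
    ext z; simp only [Set.mem_inter_iff, Set.mem_Iic, Set.mem_Icc]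
    constructor
    · rintro ⟨a, b, c⟩; exact ⟨b, a⟩
    · rintro ⟨a, b⟩; exact ⟨b, a, b.trans h1⟩
  rw [this, Real.volume_Icc, sub_zero]

lemma base_Ioi {x : ℝ} (h0 : 0 ≤ x) :
    (volume.restrict (Set.Icc (0 : ℝ) 1)) (Set.Ioi x) = ENNReal.ofReal (1 - x) := by
  rw [Measure.restrict_apply measurableSet_Ioi]
  have : Set.Ioi x ∩ Set.Icc (0 : ℝ) 1 = Set.Ioc x 1 := by
    ext z; simp only [Set.mem_inter_iff, Set.mem_Ioi, Set.mem_Icc, Set.mem_Ioc]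
    constructor
    · rintro ⟨a, b, c⟩; exact ⟨a, c⟩
    · rintro ⟨a, b⟩; exact ⟨a, h0.trans a.le, b⟩
  rw [this, Real.volume_Ioc]

lemma real_box {A B : Finset (Finset (Fin n))} (hd : Disjoint A B) {x y : ℝ} (hx0 : 0 ≤ x)
    (hx1 : x ≤ 1) (hy0 : 0 ≤ y) (hy1 : y ≤ 1) :
    (birthMeasure n).real (box A B x y) = x ^ A.card * (1 - y) ^ B.card := by
  have h1 : box A B x y = Set.pi Set.univ
      (fun K => if K ∈ A then Set.Iic x else if K ∈ B then Set.Ioi y else Set.univ) := by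
    ext t
    simp only [box, Set.mem_ofPred_eq, Set.mem_pi, Set.mem_univ, true_implies]
    constructor
    · rintro ⟨ha, hb⟩ K
      by_cases h : K ∈ A
      · simpa [h] using ha K h
      · by_cases h' : K ∈ B
        · simpa [h, h'] using hb K h'
        · simp [h, h']
    · intro h
      refine ⟨fun K hK => by simpa [hK] using h K, fun K hK => ?_⟩
      have hKA : K ∉ A := fun hA => (Finset.disjoint_left.1 hd) hA hK
      simpa [hK, hKA] using h K
  have h2 : ∀ K, (volume.restrict (Set.Icc (0 : ℝ) 1))
      (if K ∈ A then Set.Iic x else if K ∈ B then Set.Ioi y else Set.univ) =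
      ENNReal.ofReal ((if K ∈ A then x else 1) * (if K ∈ B then 1 - y else 1)) := by
    intro K
    by_cases h : K ∈ A
    · have hKB : K ∉ B := fun hB => (Finset.disjoint_left.1 hd) h hB
      simp only [h, hKB, if_true, if_false, mul_one]
      exact base_Iic hx1
    · by_cases h' : K ∈ B
      · simp only [h, h', if_true, if_false, one_mul]
        exact base_Ioi hy0
      · simp [h, h']
  rw [measureReal_def, h1, birthMeasure, Measure.pi_pi, Finset.prod_congr rfl fun K _ => h2 K,
    ← ENNReal.ofReal_prod_of_nonneg, ENNReal.toReal_ofReal, Finset.prod_mul_distrib]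
  · congr 1
    · simp [Finset.prod_ite_mem]
    · simp [Finset.prod_ite_mem]
  · refine Finset.prod_nonneg fun K _ => mul_nonneg ?_ ?_ <;> split_ifs <;> linarith
  · intro K _
    refine mul_nonneg ?_ ?_ <;> split_ifs <;> linarith

/-! ### Counting connected families -/

lemma card_superset_le (ρ : Finset (Fin n)) (k i : ℕ) (hρ : ρ.card = i) :
    ((Finset.powersetCard k (Finset.univ : Finset (Fin n))).filter (fun K => ρ ⊆ K)).card ≤
      n.choose (k - i) := by
  have : ((Finset.powersetCard k (Finset.univ : Finset (Fin n))).filter (fun K => ρ ⊆ K)) ⊆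
      (Finset.powersetCard (k - i) (Finset.univ : Finset (Fin n))).image (fun W => ρ ∪ W) := by
    intro K hK
    rw [Finset.mem_filter, Finset.mem_powersetCard] at hK
    refine Finset.mem_image.2 ⟨K \ ρ, Finset.mem_powersetCard.2 ⟨Finset.subset_univ _, ?_⟩, ?_⟩
    · rw [Finset.card_sdiff_of_subset hK.2, hK.1.2, hρ]
    · exact Finset.union_sdiff_of_subset hK.2
  refine (Finset.card_le_card this).trans (Finset.card_image_le.trans ?_)
  simp

/-- Neighbours of `K`. -/
noncomputable def nbr (k j : ℕ) (K : Finset (Fin n)) : Finset (Finset (Fin n)) :=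
  (Finset.powersetCard (k + 1) Finset.univ).filter (fun K' => j + 1 ≤ (K ∩ K').card)

lemma card_nbr_le (k j : ℕ) (hjk : j < k) (K : Finset (Fin n)) (hK : K.card = k + 1) :
    (nbr k j K).card ≤ (k + 1).choose (j + 1) * n ^ (k - j) := by
  have hsub : nbr k j K ⊆ (Finset.powersetCard (j + 1) K).biUnion (fun ρ =>
      (Finset.powersetCard (k + 1) (Finset.univ : Finset (Fin n))).filter (fun K => ρ ⊆ K)) := by
    intro K' hK'
    rw [nbr, Finset.mem_filter] at hK'
    obtain ⟨ρ, hρ, hρc⟩ := Finset.exists_subset_card_eq hK'.2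
    exact Finset.mem_biUnion.2 ⟨ρ, Finset.mem_powersetCard.2
      ⟨hρ.trans Finset.inter_subset_left, hρc⟩, Finset.mem_filter.2
      ⟨hK'.1, hρ.trans Finset.inter_subset_right⟩⟩
  refine (Finset.card_le_card hsub).trans ((Finset.card_biUnion_le_card_mul _ _ (n ^ (k - j)) ?_).trans ?_)
  · intro ρ hρ
    refine (card_superset_le ρ (k + 1) (j + 1) (Finset.mem_powersetCard.1 hρ).2).trans ?_
    have : k + 1 - (j + 1) = k - j := by omega
    rw [this]
    exact Nat.choose_le_pow _ _
  · rw [Finset.card_powersetCard, hK]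

/-- Rooted connected families of size `m`. -/
noncomputable def conn (n k j m : ℕ) (K0 : Finset (Fin n)) : Finset (Finset (Finset (Fin n))) :=
  Finset.univ.filter (fun T => RootConn j T K0 ∧ (∀ K ∈ T, K.card = k + 1) ∧ T.card = m)

/-- outer boundary of a family -/
noncomputable def outer (k j : ℕ) (T : Finset (Finset (Fin n))) : Finset (Finset (Fin n)) :=
  T.biUnion (nbr k j) \ T

lemma conn_sub {k j : ℕ} {K0 : Finset (Fin n)} {T T' : Finset (Finset (Fin n))}
    (hT : RootConn j T K0) (hT' : K0 ∈ T')
    (hc : ∀ K ∈ T, K.card = k + 1) {q : ℝ} {t : Finset (Fin n) → ℝ}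
    (h1 : t ∈ box (T.erase K0) (outer k j T) q q) (h2 : t ∈ box (T'.erase K0) (outer k j T') q q) :
    T ⊆ T' := by
  by_contra hcon
  obtain ⟨K, hK, K', hK', hn, hcard⟩ := hT.2 (T ∩ T') Finset.inter_subset_left
    (Finset.mem_inter.2 ⟨hT.1, hT'⟩) (fun h => hcon (Finset.inter_eq_left.1 h))
  rw [Finset.mem_inter] at hK
  have hK'T' : K' ∉ T' := fun h => hn (Finset.mem_inter.2 ⟨hK', h⟩)
  have hK'0 : K' ≠ K0 := by rintro rfl; exact hK'T' hT'
  have ha := h1.1 K' (Finset.mem_erase.2 ⟨hK'0, hK'⟩)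
  have hb := h2.2 K' (Finset.mem_sdiff.2 ⟨Finset.mem_biUnion.2 ⟨K, hK.2, Finset.mem_filter.2
    ⟨Finset.mem_powersetCard.2 ⟨Finset.subset_univ _, hc K' hK'⟩, hcard⟩⟩, hK'T'⟩)
  linarith

lemma card_conn_le (k j m : ℕ) (hjk : j < k) (hn : 1 ≤ n) (hm : 1 ≤ m) (K0 : Finset (Fin n)) :
    ((conn n k j m K0).card : ℝ) ≤
      (2 * ((k + 1).choose (j + 1) * n ^ (k - j) : ℕ) : ℝ) ^ (m - 1) * 2 ^ m := by
  set D : ℕ := (k + 1).choose (j + 1) * n ^ (k - j) with hD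
  have hD1 : 1 ≤ D := Nat.mul_pos (Nat.choose_pos (by omega)) (Nat.pow_pos hn)
  have hD1' : (1 : ℝ) ≤ D := by exact_mod_cast hD1
  set q : ℝ := 1 / (2 * D) with hq
  have hq0 : 0 < q := by positivity
  have hq1 : q ≤ 1 / 2 := by
    rw [hq]
    apply one_div_le_one_div_of_le <;> linarith
  have hsum : ∑ T ∈ conn n k j m K0,
      (birthMeasure n).real (box (T.erase K0) (outer k j T) q q) ≤ 1 := by
    rw [← measureReal_biUnion_finset]
    · exact measureReal_le_one
    · intro T hT T' hT' hne
      rw [Finset.mem_coe, conn, Finset.mem_filter] at hT hT'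
      rw [Function.onFun, Set.disjoint_left]
      intro t ht ht'
      exact hne (Finset.Subset.antisymm (conn_sub hT.2.1 hT'.2.1.1 hT.2.2.1 ht ht')
        (conn_sub hT'.2.1 hT.2.1.1 hT'.2.2.1 ht' ht))
    · intro T _
      exact measurableSet_box _ _ _ _
  have hbern : (1 / 2 : ℝ) ≤ (1 - q) ^ D := by
    have := one_add_mul_le_pow (a := -q) (by linarith) D
    have h2 : (D : ℝ) * q = 1 / 2 := by rw [hq]; field_simp
    have h3 : (1 + -q) = 1 - q := by ring
    rw [h3] at this
    linarith
  have hlow : ∀ T ∈ conn n k j m K0, q ^ (m - 1) * (1 / 2) ^ m ≤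
      (birthMeasure n).real (box (T.erase K0) (outer k j T) q q) := by
    intro T hT
    rw [conn, Finset.mem_filter] at hT
    rw [real_box _ hq0.le (by linarith) hq0.le (by linarith), Finset.card_erase_of_mem hT.2.1.1,
      hT.2.2.2]
    · refine mul_le_mul_of_nonneg_left ?_ (by positivity)
      have hcard : (outer k j T).card ≤ D * m := by
        refine (Finset.card_le_card Finset.sdiff_subset).trans
          ((Finset.card_biUnion_le_card_mul _ _ D ?_).trans ?_)
        · intro K hK
          exact card_nbr_le k j hjk K (hT.2.2.1 K hK)
        · rw [hT.2.2.2, mul_comm]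
      calc (1 / 2 : ℝ) ^ m ≤ ((1 - q) ^ D) ^ m := pow_le_pow_left₀ (by norm_num) hbern m
        _ = (1 - q) ^ (D * m) := (pow_mul _ _ _).symm
        _ ≤ (1 - q) ^ (outer k j T).card :=
          pow_le_pow_of_le_one (by linarith) (by linarith) hcard
    · rw [outer]
      exact Finset.disjoint_of_subset_left (Finset.erase_subset _ _) Finset.disjoint_sdiff
  have h3 : ((conn n k j m K0).card : ℝ) * (q ^ (m - 1) * (1 / 2) ^ m) ≤ 1 := by
    rw [← nsmul_eq_mul, ← Finset.sum_const]
    exact (Finset.sum_le_sum hlow).trans hsum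
  have h4 : q ^ (m - 1) * (1 / 2) ^ m = ((2 * (D : ℝ)) ^ (m - 1) * 2 ^ m)⁻¹ := by
    rw [hq, one_div, one_div, inv_pow, inv_pow, ← mul_inv]
  rw [h4, ← div_eq_mul_inv, div_le_one (by positivity)] at h3
  exact h3

end cert


/-! ### Forbidden simplices -/

section forb
variable {n : ℕ}

lemma card_ext (k j : ℕ) (hjk : j ≤ k) (S : Finset (Finset (Fin n))) (U : Finset (Fin n))
    (hS : ∀ σ ∈ S, σ ⊆ U ∧ σ.card = j + 1) :
    S.card * (n - U.card).choose (k - j) ≤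
      ((Finset.powersetCard (k + 1) (Finset.univ : Finset (Fin n))).filter
        (fun K => K ∩ U ∈ S)).card := by
  have h1 : (S ×ˢ Finset.powersetCard (k - j) Uᶜ).card = S.card * (n - U.card).choose (k - j) := by
    rw [Finset.card_product, Finset.card_powersetCard, Finset.card_compl, Fintype.card_fin]
  rw [← h1]
  have hdisj : ∀ σ ∈ S, ∀ W ∈ Finset.powersetCard (k - j) Uᶜ, (σ ∪ W) ∩ U = σ ∧ (σ ∪ W) \ U = W := by
    intro σ hσ W hW
    have a := (hS σ hσ).1
    have b := (Finset.mem_powersetCard.1 hW).1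
    constructor
    · ext x
      simp only [Finset.mem_inter, Finset.mem_union]
      constructor
      · rintro ⟨h | h, hU⟩
        · exact h
        · exact absurd hU (Finset.mem_compl.1 (b h))
      · intro h; exact ⟨Or.inl h, a h⟩
    · ext x
      simp only [Finset.mem_sdiff, Finset.mem_union]
      constructor
      · rintro ⟨h | h, hU⟩
        · exact absurd (a h) hU
        · exact h
      · intro h; exact ⟨Or.inr h, Finset.mem_compl.1 (b h)⟩
  refine Finset.card_le_card_of_injOn (fun x => x.1 ∪ x.2) ?_ ?_
  · rintro ⟨σ, W⟩ hx
    rw [Finset.mem_coe, Finset.mem_product] at hx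
    have hd := hdisj σ hx.1 W hx.2
    rw [Finset.mem_coe, Finset.mem_filter, Finset.mem_powersetCard]
    refine ⟨⟨Finset.subset_univ _, ?_⟩, ?_⟩
    · have hW := Finset.mem_powersetCard.1 hx.2
      have : Disjoint σ W := by
        rw [Finset.disjoint_left]
        intro x h1 h2
        exact Finset.mem_compl.1 (hW.1 h2) ((hS σ hx.1).1 h1)
      rw [Finset.card_union_of_disjoint this, (hS σ hx.1).2, hW.2]
      omega
    · simp only
      rw [hd.1]; exact hx.1
  · rintro ⟨σ, W⟩ hx ⟨σ', W'⟩ hx' heq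
    rw [Finset.mem_coe, Finset.mem_product] at hx hx'
    have hd := hdisj σ hx.1 W hx.2
    have hd' := hdisj σ' hx'.1 W' hx'.2
    have heq' : σ ∪ W = σ' ∪ W' := heq
    rw [heq'] at hd
    exact Prod.ext (hd.1.symm.trans hd'.1) (hd.2.symm.trans hd'.2)

/-- Simplices which are forbidden by `S`. -/
noncomputable def forb (k j : ℕ) (S : Finset (Finset (Fin n))) : Finset (Finset (Fin n)) :=
  (Finset.powersetCard (k + 1) Finset.univ).filter (fun K => ∃ R ∈ oddR j S, R ⊆ K)

lemma forb_small (k j : ℕ) (hjk : j < k) (S : Finset (Finset (Fin n)))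
    (hS : ∀ σ ∈ S, σ.card = j + 1) :
    S.card * (n - (j + 1) * S.card).choose (k - j) ≤ (forb k j S).card := by
  set U := S.biUnion id with hU
  have hUc : U.card ≤ (j + 1) * S.card := by
    rw [mul_comm]
    exact Finset.card_biUnion_le_card_mul _ _ _ (fun σ hσ => (hS σ hσ).le)
  have hsub : ∀ σ ∈ S, σ ⊆ U := fun σ hσ => Finset.subset_biUnion_of_mem id hσ
  have h1 := card_ext k j hjk.le S U (fun σ hσ => ⟨hsub σ hσ, hS σ hσ⟩)
  refine le_trans (Nat.mul_le_mul_left _ (Nat.choose_le_choose _ (by omega))) (h1.trans ?_)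
  refine Finset.card_le_card ?_
  intro K hK
  rw [Finset.mem_filter] at hK
  refine Finset.mem_filter.2 ⟨hK.1, ?_⟩
  have hKc := (Finset.mem_powersetCard.1 hK.1).2
  have hσc := hS _ hK.2
  obtain ⟨w, hw, hw2⟩ := Finset.exists_mem_notMem_of_card_lt_card (s := K ∩ U) (t := K) (by omega)
  have hwU : w ∉ U := fun h => hw2 (Finset.mem_inter.2 ⟨hw, h⟩)
  refine ⟨insert w (K ∩ U), ?_, Finset.insert_subset hw Finset.inter_subset_left⟩
  rw [oddR, Finset.mem_filter, Finset.mem_powersetCard]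
  refine ⟨⟨Finset.subset_univ _, by rw [Finset.card_insert_of_notMem hw2, hσc]⟩, ?_⟩
  have : S.filter (fun σ' => σ' ⊆ insert w (K ∩ U)) = {K ∩ U} := by
    ext σ'
    simp only [Finset.mem_filter, Finset.mem_singleton]
    constructor
    · rintro ⟨h1, h2⟩
      have : w ∉ σ' := fun h => hwU (hsub σ' h1 h)
      exact Finset.eq_of_subset_of_card_le ((Finset.subset_insert_iff_of_notMem this).1 h2)
        (by rw [hσc, hS σ' h1])
    · rintro rfl
      exact ⟨hK.2, Finset.subset_insert _ _⟩
  rw [cnt, this]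
  simp

lemma forb_large (k j : ℕ) (hjk : j < k) (S : Finset (Finset (Fin n))) :
    (oddR j S).card * (n - (j + 2)).choose (k - j - 1) ≤
      (k + 1).choose (j + 2) * (forb k j S).card := by
  have h1 : ∀ R ∈ oddR j S, (n - (j + 2)).choose (k - j - 1) ≤
      ((forb k j S).filter (fun K => R ⊆ K)).card := by
    intro R hR
    have hRc : R.card = j + 2 := (Finset.mem_powersetCard.1 (Finset.mem_filter.1 hR).1).2
    have := card_ext k (j + 1) (by omega) {R} R (by simp [hRc])
    rw [Finset.card_singleton, one_mul, hRc, ← Nat.sub_sub] at this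
    refine this.trans (Finset.card_le_card ?_)
    intro K hK
    rw [Finset.mem_filter, Finset.mem_singleton, Finset.inter_eq_right] at hK
    exact Finset.mem_filter.2 ⟨Finset.mem_filter.2 ⟨hK.1, R, hR, hK.2⟩, hK.2⟩
  rw [← smul_eq_mul, ← Finset.sum_const]
  refine (Finset.sum_le_sum h1).trans ?_
  simp only [Finset.card_filter]
  rw [Finset.sum_comm, mul_comm, ← smul_eq_mul, ← Finset.sum_const]
  refine Finset.sum_le_sum fun K hK => ?_
  have hKc : K.card = k + 1 := (Finset.mem_powersetCard.1 (Finset.mem_filter.1 hK).1).2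
  rw [← Finset.card_filter, ← hKc, ← Finset.card_powersetCard]
  refine Finset.card_le_card ?_
  intro R hR
  rw [Finset.mem_filter] at hR
  exact Finset.mem_powersetCard.2
    ⟨hR.2, (Finset.mem_powersetCard.1 (Finset.mem_filter.1 hR.1).1).2⟩

/-! ### First moment bound -/

/-- The event that some certified obstruction of size `s` with at least `h` forbidden simplices
occurs at some time in `[p0,p1]`. -/
def Ev (n k j : ℕ) (p0 p1 : ℝ) (s h : ℕ) : Set (Finset (Fin n) → ℝ) :=
  {t | ∃ p, p0 ≤ p ∧ p ≤ p1 ∧ ∃ (S T : Finset (Finset (Fin n))) (K0 : Finset (Fin n)),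
    S.card = s ∧ h ≤ (forb k j S).card ∧ RootConn j T K0 ∧ (∀ K ∈ T, K.card = k + 1 ∧ t K ≤ p) ∧
    T.card ≤ s ∧ (∀ σ ∈ S, σ.card = j + 1 ∧ ∃ K ∈ T, σ ⊆ K) ∧ ∀ K ∈ forb k j S, p < t K}

/-- Candidates for `S` given `T`. -/
noncomputable def cand (k j h : ℕ) (T : Finset (Finset (Fin n))) : Finset (Finset (Finset (Fin n))) :=
  (T.biUnion (fun K => Finset.powersetCard (j + 1) K)).powerset.filter
    (fun S => h ≤ (forb k j S).card ∧ Disjoint T (forb k j S))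

lemma card_cand_le (k j h : ℕ) (T : Finset (Finset (Fin n))) (hT : ∀ K ∈ T, K.card = k + 1) :
    (cand k j h T).card ≤ 2 ^ ((k + 1).choose (j + 1) * T.card) := by
  refine (Finset.card_filter_le _ _).trans ?_
  rw [Finset.card_powerset]
  refine Nat.pow_le_pow_right (by norm_num) ?_
  rw [mul_comm]
  refine Finset.card_biUnion_le_card_mul _ _ _ (fun K hK => ?_)
  rw [Finset.card_powersetCard, hT K hK]

lemma Ev_subset (n k j : ℕ) (p0 p1 : ℝ) (s h : ℕ) :
    Ev n k j p0 p1 s h ⊆ ⋃ m ∈ Finset.Icc 1 s, ⋃ K0 ∈ Finset.powersetCard (k + 1) (Finset.univ : Finset (Fin n)),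
      ⋃ T ∈ conn n k j m K0, ⋃ S ∈ cand k j h T, box T (forb k j S) p1 p0 := by
  rintro t ⟨p, hp0, hp1, S, T, K0, hSc, hh, hT, hTK, hTs, hST, hf⟩
  simp only [Set.mem_iUnion]
  refine ⟨T.card, Finset.mem_Icc.2 ⟨Finset.card_pos.2 ⟨K0, hT.1⟩, hTs⟩, K0,
    Finset.mem_powersetCard.2 ⟨Finset.subset_univ _, (hTK K0 hT.1).1⟩, T,
    Finset.mem_filter.2 ⟨Finset.mem_univ _, hT, fun K hK => (hTK K hK).1, rfl⟩, S,
    Finset.mem_filter.2 ⟨Finset.mem_powerset.2 ?_, hh, ?_⟩, ?_, ?_⟩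
  · intro σ hσ
    obtain ⟨h1, K, hK, h2⟩ := hST σ hσ
    exact Finset.mem_biUnion.2 ⟨K, hK, Finset.mem_powersetCard.2 ⟨h2, h1⟩⟩
  · rw [Finset.disjoint_left]
    intro K hK hK'
    exact absurd (hTK K hK).2 (not_le.2 (hf K hK'))
  · intro K hK
    exact (hTK K hK).2.trans hp1
  · intro K hK
    exact hp0.trans_lt (hf K hK)

lemma real_Ev_le (k j : ℕ) (hjk : j < k) (hn : 1 ≤ n) {p0 p1 : ℝ} (h00 : 0 ≤ p0) (h01 : p0 ≤ 1)
    (h10 : 0 ≤ p1) (h11 : p1 ≤ 1) (s h : ℕ) (A : ℕ) (hA : A = (k + 1).choose (j + 1)) (x : ℝ)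
    (hx : x = 2 * (A * n ^ (k - j)) * p1 * 2 ^ (A + 1)) (hx1 : 1 ≤ x) :
    (birthMeasure n).real (Ev n k j p0 p1 s h) ≤
      n ^ (k + 1) * p1 * 2 ^ (A + 1) * (2 * x) ^ s * Real.exp (-(p0 * h)) := by
  have hexp : (1 - p0) ^ h ≤ Real.exp (-(p0 * h)) := by
    have := Real.add_one_le_exp (-p0)
    calc (1 - p0) ^ h ≤ (Real.exp (-p0)) ^ h := pow_le_pow_left₀ (by linarith) (by linarith) h
      _ = Real.exp (-(p0 * h)) := by rw [← Real.exp_nat_mul]; congr 1; ring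
  -- single box
  have hbox : ∀ m, ∀ K0, ∀ T ∈ conn n k j m K0, ∀ S ∈ cand k j h T,
      (birthMeasure n).real (box T (forb k j S) p1 p0) ≤ p1 ^ m * Real.exp (-(p0 * h)) := by
    intro m K0 T hT S hS
    have hT' := (Finset.mem_filter.1 hT).2
    have hS' := (Finset.mem_filter.1 hS).2
    rw [real_box hS'.2 h10 h11 h00 h01, hT'.2.2]
    refine mul_le_mul_of_nonneg_left (le_trans ?_ hexp) (by positivity)
    exact pow_le_pow_of_le_one (by linarith) (by linarith) hS'.1
  have hT : ∀ m, ∀ K0, ∀ T ∈ conn n k j m K0,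
      (birthMeasure n).real (⋃ S ∈ cand k j h T, box T (forb k j S) p1 p0) ≤
        2 ^ (A * m) * (p1 ^ m * Real.exp (-(p0 * h))) := by
    intro m K0 T hT
    have hT' := (Finset.mem_filter.1 hT).2
    refine (measureReal_biUnion_finset_le _ _).trans
      ((Finset.sum_le_card_nsmul _ _ _ (hbox m K0 T hT)).trans ?_)
    rw [nsmul_eq_mul]
    refine mul_le_mul_of_nonneg_right ?_ (by positivity)
    have := card_cand_le k j h T hT'.2.1
    rw [hT'.2.2, ← hA] at this
    exact_mod_cast this
  have hK : ∀ m ∈ Finset.Icc 1 s, ∀ K0,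
      (birthMeasure n).real (⋃ T ∈ conn n k j m K0, ⋃ S ∈ cand k j h T, box T (forb k j S) p1 p0) ≤
        p1 * 2 ^ (A + 1) * x ^ s * Real.exp (-(p0 * h)) := by
    intro m hm K0
    rw [Finset.mem_Icc] at hm
    refine (measureReal_biUnion_finset_le _ _).trans
      ((Finset.sum_le_card_nsmul _ _ _ (hT m K0)).trans ?_)
    rw [nsmul_eq_mul]
    have hc := card_conn_le (n := n) k j m hjk hn hm.1 K0
    rw [← hA] at hc
    obtain ⟨m', rfl⟩ : ∃ m', m = m' + 1 := ⟨m - 1, by omega⟩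
    rw [Nat.add_sub_cancel] at hc
    push_cast at hc
    calc ((conn n k j (m' + 1) K0).card : ℝ) * (2 ^ (A * (m' + 1)) * (p1 ^ (m' + 1) * Real.exp (-(p0 * h))))
        ≤ ((2 * (A * n ^ (k - j)) : ℝ) ^ m' * 2 ^ (m' + 1)) *
          (2 ^ (A * (m' + 1)) * (p1 ^ (m' + 1) * Real.exp (-(p0 * h)))) :=
          mul_le_mul_of_nonneg_right hc (by positivity)
      _ = p1 * 2 ^ (A + 1) * x ^ m' * Real.exp (-(p0 * h)) := by
          rw [hx]
          have e1 : (2:ℝ) ^ (A * (m' + 1)) = ((2:ℝ) ^ A) ^ m' * 2 ^ A := by rw [← pow_mul]; ring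
          rw [e1, pow_succ (2:ℝ) A, mul_pow _ ((2:ℝ) ^ A * 2) m', mul_pow ((2:ℝ) ^ A) 2 m', mul_pow _ p1 m',
            pow_succ p1 m', pow_succ (2:ℝ) m']
          generalize ((2 * (A * n ^ (k - j)) : ℝ)) ^ m' = y
          generalize (2:ℝ) ^ m' = z
          generalize ((2:ℝ) ^ A) ^ m' = w
          ring
      _ ≤ p1 * 2 ^ (A + 1) * x ^ s * Real.exp (-(p0 * h)) := by
          gcongr
          omega
  have hm : ∀ m ∈ Finset.Icc 1 s, (birthMeasure n).real
      (⋃ K0 ∈ Finset.powersetCard (k + 1) (Finset.univ : Finset (Fin n)),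
      ⋃ T ∈ conn n k j m K0, ⋃ S ∈ cand k j h T, box T (forb k j S) p1 p0) ≤
      n ^ (k + 1) * (p1 * 2 ^ (A + 1) * x ^ s * Real.exp (-(p0 * h))) := by
    intro m hm
    refine (measureReal_biUnion_finset_le _ _).trans
      ((Finset.sum_le_card_nsmul _ _ _ (fun K0 _ => hK m hm K0)).trans ?_)
    rw [nsmul_eq_mul]
    refine mul_le_mul_of_nonneg_right ?_ (by positivity)
    rw [Finset.card_powersetCard, Finset.card_univ, Fintype.card_fin]
    exact_mod_cast Nat.choose_le_pow _ _
  refine (measureReal_mono (Ev_subset n k j p0 p1 s h) (measure_ne_top _ _)).trans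
    ((measureReal_biUnion_finset_le _ _).trans ((Finset.sum_le_card_nsmul _ _ _ hm).trans ?_))
  rw [nsmul_eq_mul, Nat.card_Icc, Nat.add_sub_cancel]
  have hs : (s : ℝ) ≤ 2 ^ s := by exact_mod_cast Nat.lt_two_pow_self.le
  calc (s : ℝ) * (n ^ (k + 1) * (p1 * 2 ^ (A + 1) * x ^ s * Real.exp (-(p0 * h))))
      ≤ 2 ^ s * (n ^ (k + 1) * (p1 * 2 ^ (A + 1) * x ^ s * Real.exp (-(p0 * h)))) :=
        mul_le_mul_of_nonneg_right hs (by positivity)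
    _ = _ := by rw [mul_pow]; ring

end forb


/-! ### Asymptotics -/

lemma polylog (a : ℕ) (ε : ℝ) (hε : 0 < ε) :
    Tendsto (fun n : ℕ => Real.log n ^ a * (n : ℝ) ^ (-ε)) atTop (nhds 0) := by
  have h := (isLittleO_log_rpow_rpow_atTop (a : ℝ) hε).tendsto_div_nhds_zero
  have h2 := h.comp tendsto_natCast_atTop_atTop
  refine h2.congr fun n => ?_
  simp only [Function.comp]
  rw [Real.rpow_natCast, Real.rpow_neg (Nat.cast_nonneg n), div_eq_mul_inv]

lemma choose_lower (c d : ℕ) (η : ℝ) (hη : η < 1) :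
    ∀ᶠ n : ℕ in atTop, η * (n : ℝ) ^ d ≤ d.factorial * ((n - c).choose d : ℝ) := by
  have h1 : Tendsto (fun n : ℕ => (1 - ((c + d : ℕ) : ℝ) / n) ^ d) atTop (nhds ((1 - 0) ^ d)) :=
    (tendsto_const_nhds.sub (tendsto_const_div_atTop_nhds_zero_nat _)).pow d
  rw [sub_zero, one_pow] at h1
  filter_upwards [h1.eventually (lt_mem_nhds hη), eventually_ge_atTop (c + d + 1)] with n hn hn1
  have hn0 : (0 : ℝ) < n := by exact_mod_cast (by omega : 0 < n)
  have h2 := Nat.pow_sub_le_descFactorial (n - c) d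
  rw [Nat.descFactorial_eq_factorial_mul_choose] at h2
  have h3 : (n - (c + d)) ^ d ≤ (n - c + 1 - d) ^ d := Nat.pow_le_pow_left (by omega) d
  have h4 : (((n - (c + d) : ℕ) : ℝ)) ^ d ≤ d.factorial * ((n - c).choose d : ℝ) := by
    exact_mod_cast h3.trans h2
  refine le_trans ?_ h4
  rw [Nat.cast_sub (by omega)]
  calc η * (n : ℝ) ^ d ≤ (1 - ((c + d : ℕ) : ℝ) / n) ^ d * n ^ d := by gcongr
    _ = _ := by rw [← mul_pow]; congr 1; field_simp

/-- The scaled probabilities. -/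
noncomputable def pp (d : ℕ) (b : ℝ) (n : ℕ) : ℝ := b * d.factorial * Real.log n / (n : ℝ) ^ d

lemma pp_nonneg (d : ℕ) {b : ℝ} (hb : 0 ≤ b) (n : ℕ) : 0 ≤ pp d b n := by
  unfold pp
  have := Real.log_natCast_nonneg n
  positivity

lemma pp_mono (d : ℕ) {b b' : ℝ} (hb : b ≤ b') (n : ℕ) : pp d b n ≤ pp d b' n := by
  unfold pp
  have := Real.log_natCast_nonneg n
  gcongr

lemma pp_tendsto (d : ℕ) (hd : 1 ≤ d) (b : ℝ) : Tendsto (pp d b) atTop (nhds 0) := by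
  have h := (polylog 1 d (by exact_mod_cast hd)).const_mul (b * d.factorial)
  rw [mul_zero] at h
  refine h.congr fun n => ?_
  unfold pp
  rw [Real.rpow_neg (Nat.cast_nonneg n), Real.rpow_natCast]
  ring

lemma pp_lt_one (d : ℕ) (hd : 1 ≤ d) (b : ℝ) : ∀ᶠ n in atTop, pp d b n < 1 :=
  (pp_tendsto d hd b).eventually (gt_mem_nhds one_pos)

lemma pp_mul_pow (d : ℕ) (b : ℝ) {n : ℕ} (hn : 1 ≤ n) :
    pp d b n * (n : ℝ) ^ d = b * d.factorial * Real.log n := by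
  unfold pp
  have : (0 : ℝ) < n := by exact_mod_cast hn
  field_simp

/-! ### Obstructions give events -/

lemma mem_Ev {n k j : ℕ} (hj : 1 ≤ j) {t : Finset (Fin n) → ℝ} {p0 p1 p : ℝ} (h0 : p0 ≤ p)
    (h1 : p ≤ p1) {S : Finset (Finset (Fin n))}
    (hS : Obst (complexAt k n t p) j S) (hN : NC (complexAt k n t p) j S)
    (hmin : ∀ S', Obst (complexAt k n t p) j S' → NC (complexAt k n t p) j S' → S.card ≤ S'.card)
    (hne : S.Nonempty) {h : ℕ} (hh : h ≤ (forb k j S).card) :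
    t ∈ Ev n k j p0 p1 S.card h := by
  obtain ⟨T, K0, hT1, hT2, hT3, hT4⟩ := exists_cert hj hS hne (traversal hS hN hmin)
  refine ⟨p, h0, h1, S, T, K0, rfl, hh, hT1, hT2, hT3,
    fun σ hσ => ⟨(hS.simp σ hσ).2, hT4 σ hσ⟩, ?_⟩
  intro K hK
  by_contra hcon
  push Not at hcon
  obtain ⟨hK1, R, hR, hRK⟩ := Finset.mem_filter.1 hK
  obtain ⟨hR1, hR2⟩ := Finset.mem_filter.1 hR
  have hRc := (Finset.mem_powersetCard.1 hR1).2
  have hKc := (Finset.mem_powersetCard.1 hK1).2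
  have := hS.even R ((mem_complexAt (by omega)).2 ⟨K, hKc, hcon, hRK⟩) hRc
  exact Nat.not_even_iff_odd.2 hR2 this

lemma card_obst_le {n k j : ℕ} {t : Finset (Fin n) → ℝ} {p : ℝ} {S : Finset (Finset (Fin n))}
    (hS : Obst (complexAt k n t p) j S) : S.card ≤ n ^ (j + 1) := by
  have : S ⊆ Finset.powersetCard (j + 1) Finset.univ := fun σ hσ =>
    Finset.mem_powersetCard.2 ⟨Finset.subset_univ _, (hS.simp σ hσ).2⟩
  refine (Finset.card_le_card this).trans ?_
  rw [Finset.card_powersetCard, Finset.card_univ, Fintype.card_fin]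
  exact Nat.choose_le_pow _ _

lemma NC.nonempty {n j : ℕ} {G : Set (Finset (Fin n))} {S : Finset (Finset (Fin n))}
    (h : NC G j S) : S.Nonempty := by
  rw [Finset.nonempty_iff_ne_empty]
  rintro rfl
  exact h ⟨fun _ => 0, fun σ _ _ => by simp [ind, bd]⟩

/-- Bad event: a large minimal obstruction. -/
def Bad (k j s1 : ℕ) (b b1 : ℝ) (n : ℕ) : Set (Finset (Fin n) → ℝ) :=
  {t | ∃ p, pp (k - j) b n ≤ p ∧ p ≤ pp (k - j) b1 n ∧ ∃ S, Obst (complexAt k n t p) j S ∧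
    NC (complexAt k n t p) j S ∧
    (∀ S', Obst (complexAt k n t p) j S' → NC (complexAt k n t p) j S' → S.card ≤ S'.card) ∧
    s1 ≤ S.card}

/-- The bound for a single event. -/
lemma real_Ev_le' (k j : ℕ) (hjk : j < k) (b b1 : ℝ) (hb : 0 < b) (hbb : b ≤ b1) :
    ∃ C1 C2 : ℝ, 0 < C1 ∧ 0 < C2 ∧ ∀ᶠ n : ℕ in atTop, ∀ s h : ℕ,
      (birthMeasure n).real (Ev n k j (pp (k - j) b n) (pp (k - j) b1 n) s h) ≤
        C2 * Real.log n * (n : ℝ) ^ (j + 1) * (C1 * Real.log n) ^ s *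
          Real.exp (-(pp (k - j) b n * h)) := by
  set A := (k + 1).choose (j + 1) with hA
  have hA1 : 1 ≤ A := Nat.choose_pos (by omega)
  have hA0 : (0 : ℝ) < A := by exact_mod_cast hA1
  have hb1 : 0 < b1 := hb.trans_le hbb
  have hf : (0 : ℝ) < (k - j).factorial := by exact_mod_cast Nat.factorial_pos _
  set C1 : ℝ := 2 * (2 * A * (b1 * (k - j).factorial) * 2 ^ (A + 1)) with hC1
  have hC10 : 0 < C1 := by positivity
  have hlog : Tendsto (fun n : ℕ => Real.log n) atTop atTop :=
    Real.tendsto_log_atTop.comp tendsto_natCast_atTop_atTop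
  refine ⟨C1, b1 * (k - j).factorial * 2 ^ (A + 1), hC10, by positivity, ?_⟩
  filter_upwards [eventually_ge_atTop 1, pp_lt_one (k - j) (by omega) b1,
    hlog.eventually_ge_atTop (2 / C1)] with n hn h1 hL s h
  have hnn : (0 : ℝ) < n := by exact_mod_cast hn
  have hx : 2 * ((A : ℝ) * n ^ (k - j)) * pp (k - j) b1 n * 2 ^ (A + 1) = C1 * Real.log n / 2 := by
    have := pp_mul_pow (k - j) b1 hn
    calc 2 * ((A : ℝ) * n ^ (k - j)) * pp (k - j) b1 n * 2 ^ (A + 1)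
        = 2 * A * (pp (k - j) b1 n * n ^ (k - j)) * 2 ^ (A + 1) := by ring
      _ = _ := by rw [this, hC1]; ring
  have hx1 : 1 ≤ C1 * Real.log n / 2 := by
    rw [div_le_iff₀ hC10] at hL; linarith
  have := real_Ev_le (n := n) k j hjk hn (pp_nonneg (k - j) hb.le n)
    ((pp_mono (k - j) hbb n).trans h1.le) (pp_nonneg (k - j) hb1.le n) h1.le s h A hA
    (C1 * Real.log n / 2) hx.symm hx1
  refine this.trans (le_of_eq ?_)
  have e : (n : ℝ) ^ (k + 1) * pp (k - j) b1 n = b1 * (k - j).factorial * Real.log n * n ^ (j + 1) := by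
    rw [← pp_mul_pow (k - j) b1 hn]
    have : (n : ℝ) ^ (k + 1) = n ^ (k - j) * n ^ (j + 1) := by
      rw [← pow_add]; congr 1; omega
    rw [this]; ring
  rw [e, mul_div_cancel₀ _ (two_ne_zero)]
  ring

lemma exp_log_rpow {n : ℕ} (hn : 1 ≤ n) (a : ℝ) : Real.exp (-(a * Real.log n)) = (n : ℝ) ^ (-a) := by
  have : (0 : ℝ) < n := by exact_mod_cast hn
  rw [Real.rpow_def_of_pos this]; congr 1; ring

/-- small obstructions -/
lemma small_tendsto (k j : ℕ) (hjk : j < k) (b b1 : ℝ) (hb : 0 < b) (hbb : b ≤ b1)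
    (s : ℕ) (hs : (j : ℝ) + 1 < b * s) :
    Tendsto (fun n : ℕ => (birthMeasure n).real (Ev n k j (pp (k - j) b n) (pp (k - j) b1 n) s
      (s * (n - (j + 1) * s).choose (k - j)))) atTop (nhds 0) := by
  obtain ⟨C1, C2, hC1, hC2, hE⟩ := real_Ev_le' k j hjk b b1 hb hbb
  have hs0 : (0 : ℝ) < b * s := lt_trans (by positivity) hs
  obtain ⟨η, hη1, hη2⟩ : ∃ η : ℝ, η < 1 ∧ (j : ℝ) + 1 < η * (b * s) := by
    obtain ⟨y, hy1, hy2⟩ := exists_between hs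
    exact ⟨y / (b * s), by rw [div_lt_one hs0]; exact hy2, by rw [div_mul_cancel₀ _ hs0.ne']; exact hy1⟩
  have h0 := (polylog (s + 1) (η * (b * s) - (j + 1)) (by linarith)).const_mul (C2 * C1 ^ s)
  rw [mul_zero] at h0
  refine tendsto_of_tendsto_of_tendsto_of_le_of_le' tendsto_const_nhds h0
    (Eventually.of_forall fun n => measureReal_nonneg) ?_
  filter_upwards [hE, choose_lower ((j + 1) * s) (k - j) η hη1, eventually_ge_atTop 1] with n hn hc hn1
  have hnn : (0 : ℝ) < n := by exact_mod_cast hn1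
  have hL := Real.log_natCast_nonneg n
  refine (hn s _).trans ?_
  have hexp : Real.exp (-(pp (k - j) b n * ((s * (n - (j + 1) * s).choose (k - j) : ℕ) : ℝ))) ≤
      (n : ℝ) ^ (-(η * (b * s))) := by
    rw [← exp_log_rpow hn1]
    refine Real.exp_le_exp.2 (neg_le_neg ?_)
    push_cast
    unfold pp
    rw [div_mul_eq_mul_div, le_div_iff₀ (by positivity)]
    calc η * (b * s) * Real.log n * n ^ (k - j) = (b * s * Real.log n) * (η * n ^ (k - j)) := by ring
      _ ≤ (b * s * Real.log n) * _ := mul_le_mul_of_nonneg_left hc (by positivity)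
      _ = _ := by ring
  calc _ ≤ C2 * Real.log n * (n : ℝ) ^ (j + 1) * (C1 * Real.log n) ^ s * (n : ℝ) ^ (-(η * (b * s))) :=
        mul_le_mul_of_nonneg_left hexp (by positivity)
    _ = _ := by
      have : (n : ℝ) ^ (-(η * (b * s) - (j + 1))) = (n : ℝ) ^ (j + 1) * (n : ℝ) ^ (-(η * (b * s))) := by
        rw [← Real.rpow_natCast, ← Real.rpow_add hnn]; congr 1; push_cast; ring
      rw [this, mul_pow]; ring


lemma forb_lower (k j : ℕ) (hjk : j < k) : ∃ c : ℝ, 0 < c ∧ ∀ᶠ n : ℕ in atTop,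
    ∀ S : Finset (Finset (Fin n)), n * S.card ≤ (j + 2) * (oddR j S).card →
      ⌈c * S.card * (n : ℝ) ^ (k - j)⌉₊ ≤ (forb k j S).card := by
  have hM : 0 < (k + 1).choose (j + 2) := Nat.choose_pos (by omega)
  have hM' : (0 : ℝ) < (k + 1).choose (j + 2) := by exact_mod_cast hM
  have hf : (0 : ℝ) < (k - j - 1).factorial := by exact_mod_cast Nat.factorial_pos _
  refine ⟨1 / (2 * ((j + 2) * (k - j - 1).factorial * (k + 1).choose (j + 2))), by positivity, ?_⟩
  filter_upwards [choose_lower (j + 2) (k - j - 1) (1 / 2) (by norm_num)] with n hc S hS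
  have h2 := forb_large k j hjk S
  have hS' : (n : ℝ) * S.card ≤ (j + 2) * (oddR j S).card := by exact_mod_cast hS
  have h2' : ((oddR j S).card : ℝ) * ((n - (j + 2)).choose (k - j - 1) : ℝ) ≤
      (k + 1).choose (j + 2) * (forb k j S).card := by exact_mod_cast h2
  rw [Nat.ceil_le, one_div, mul_assoc, inv_mul_le_iff₀ (by positivity)]
  have e : (n : ℝ) ^ (k - j) = n * n ^ (k - j - 1) := by
    rw [← pow_succ']; congr 1; omega
  rw [e]
  calc (S.card : ℝ) * (n * n ^ (k - j - 1)) = 2 * ((n * S.card) * (1 / 2 * n ^ (k - j - 1))) := by ring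
    _ ≤ 2 * (((j + 2) * (oddR j S).card) *
        ((k - j - 1).factorial * ((n - (j + 2)).choose (k - j - 1) : ℝ))) := by gcongr
    _ = 2 * ((j + 2) * (k - j - 1).factorial * ((oddR j S).card * ((n - (j + 2)).choose (k - j - 1) : ℝ))) := by
        ring
    _ ≤ 2 * ((j + 2) * (k - j - 1).factorial * ((k + 1).choose (j + 2) * (forb k j S).card)) := by gcongr
    _ = _ := by ring

lemma large_tendsto (k j : ℕ) (hjk : j < k) (b b1 : ℝ) (hb : 0 < b) (hbb : b ≤ b1) (c : ℝ) (hc : 0 < c) :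
    ∃ s0 : ℕ, Tendsto (fun n : ℕ => ∑ s ∈ Finset.Icc s0 (n ^ (j + 1)),
      (birthMeasure n).real (Ev n k j (pp (k - j) b n) (pp (k - j) b1 n) s
        ⌈c * s * (n : ℝ) ^ (k - j)⌉₊)) atTop (nhds 0) := by
  obtain ⟨C1, C2, hC1, hC2, hE⟩ := real_Ev_le' k j hjk b b1 hb hbb
  have hf : (0 : ℝ) < (k - j).factorial := by exact_mod_cast Nat.factorial_pos _
  set γ : ℝ := b * (k - j).factorial * c with hγ
  have hγ0 : 0 < γ := by positivity
  obtain ⟨s0, hs0⟩ := exists_nat_ge ((2 * (j : ℝ) + 3) / (γ / 2))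
  rw [div_le_iff₀ (by positivity)] at hs0
  refine ⟨s0, ?_⟩
  have h0 := (polylog 1 1 one_pos).const_mul C2
  rw [mul_zero] at h0
  have hl := (polylog 1 (γ / 2) (by positivity)).const_mul C1
  rw [mul_zero] at hl
  refine tendsto_of_tendsto_of_tendsto_of_le_of_le' tendsto_const_nhds h0
    (Eventually.of_forall fun n => Finset.sum_nonneg fun _ _ => measureReal_nonneg) ?_
  filter_upwards [hE, hl.eventually (gt_mem_nhds one_pos), eventually_ge_atTop 1] with n hn hl hn1
  have hnn : (0 : ℝ) < n := by exact_mod_cast hn1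
  have hnn1 : (1 : ℝ) ≤ n := by exact_mod_cast hn1
  have hL := Real.log_natCast_nonneg n
  have hterm : ∀ s ∈ Finset.Icc s0 (n ^ (j + 1)),
      (birthMeasure n).real (Ev n k j (pp (k - j) b n) (pp (k - j) b1 n) s
        ⌈c * s * (n : ℝ) ^ (k - j)⌉₊) ≤ C2 * Real.log n * (n : ℝ) ^ (j + 1) * (n : ℝ) ^ (-(2 * (j : ℝ) + 3)) := by
    intro s hs
    rw [Finset.mem_Icc] at hs
    refine (hn s _).trans ?_
    have hexp : Real.exp (-(pp (k - j) b n * (⌈c * s * (n : ℝ) ^ (k - j)⌉₊ : ℝ))) ≤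
        (n : ℝ) ^ (-(γ * s)) := by
      rw [← exp_log_rpow hn1]
      refine Real.exp_le_exp.2 (neg_le_neg ?_)
      calc γ * s * Real.log n = c * s * (b * (k - j).factorial * Real.log n) := by rw [hγ]; ring
        _ = pp (k - j) b n * (c * s * (n : ℝ) ^ (k - j)) := by rw [← pp_mul_pow (k - j) b hn1]; ring
        _ ≤ _ := mul_le_mul_of_nonneg_left (Nat.le_ceil _) (pp_nonneg _ hb.le n)
    have hp : (C1 * Real.log n) ^ s * Real.exp (-(pp (k - j) b n * (⌈c * s * (n : ℝ) ^ (k - j)⌉₊ : ℝ))) ≤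
        (n : ℝ) ^ (-(2 * (j : ℝ) + 3)) := by
      calc _ ≤ (C1 * Real.log n) ^ s * (n : ℝ) ^ (-(γ * s)) :=
            mul_le_mul_of_nonneg_left hexp (by positivity)
        _ = (C1 * (Real.log n ^ 1 * (n : ℝ) ^ (-(γ / 2)))) ^ s * (n : ℝ) ^ (-(γ / 2 * s)) := by
            have e1 : (n : ℝ) ^ (-(γ * s)) = ((n : ℝ) ^ (-(γ / 2))) ^ s * (n : ℝ) ^ (-(γ / 2 * s)) := by
              rw [← Real.rpow_natCast, ← Real.rpow_mul hnn.le, ← Real.rpow_add hnn]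
              congr 1; ring
            rw [e1, pow_one, ← mul_assoc C1, mul_pow (C1 * Real.log n), mul_assoc]
        _ ≤ 1 * (n : ℝ) ^ (-(γ / 2 * s)) := by
            refine mul_le_mul_of_nonneg_right (pow_le_one₀ (by positivity) hl.le) (by positivity)
        _ ≤ _ := by
            rw [one_mul]
            refine Real.rpow_le_rpow_of_exponent_le hnn1 (neg_le_neg ?_)
            have : (s0 : ℝ) ≤ s := by exact_mod_cast hs.1
            nlinarith
    rw [mul_assoc]
    exact mul_le_mul_of_nonneg_left hp (by positivity)
  refine (Finset.sum_le_card_nsmul _ _ _ hterm).trans ?_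
  rw [nsmul_eq_mul, Nat.card_Icc]
  have hs1 : 1 ≤ s0 := by
    rcases Nat.eq_zero_or_pos s0 with h | h
    · rw [h] at hs0
      have : (0 : ℝ) ≤ j := Nat.cast_nonneg j
      norm_num at hs0
      linarith
    · exact h
  have hcard : ((n ^ (j + 1) + 1 - s0 : ℕ) : ℝ) ≤ (n : ℝ) ^ (j + 1) := by
    have : n ^ (j + 1) + 1 - s0 ≤ n ^ (j + 1) := by omega
    exact_mod_cast this
  have e : (n : ℝ) ^ (j + 1) * (n : ℝ) ^ (j + 1) * (n : ℝ) ^ (-(2 * (j : ℝ) + 3)) = (n : ℝ) ^ (-(1 : ℝ)) := by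
    rw [← Real.rpow_natCast, ← Real.rpow_add hnn, ← Real.rpow_add hnn]
    congr 1; push_cast; ring
  calc _ ≤ (n : ℝ) ^ (j + 1) * (C2 * Real.log n * (n : ℝ) ^ (j + 1) * (n : ℝ) ^ (-(2 * (j : ℝ) + 3))) :=
        mul_le_mul_of_nonneg_right hcard (by positivity)
    _ = C2 * (Real.log n ^ 1 * ((n : ℝ) ^ (j + 1) * (n : ℝ) ^ (j + 1) * (n : ℝ) ^ (-(2 * (j : ℝ) + 3)))) := by
        ring
    _ = _ := by rw [e]

lemma Bad_tendsto (k j : ℕ) (hj : 1 ≤ j) (hjk : j < k) (s1 : ℕ) (b b1 : ℝ) (hb : 0 < b) (hbb : b ≤ b1)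
    (hs : (j : ℝ) + 1 < b * s1) :
    Tendsto (fun n : ℕ => (birthMeasure n).real (Bad k j s1 b b1 n)) atTop (nhds 0) := by
  obtain ⟨c, hc, hforb⟩ := forb_lower k j hjk
  obtain ⟨s0, hlarge⟩ := large_tendsto k j hjk b b1 hb hbb c hc
  have hsmall : Tendsto (fun n : ℕ => ∑ s ∈ Finset.Ico s1 s0,
      (birthMeasure n).real (Ev n k j (pp (k - j) b n) (pp (k - j) b1 n) s
      (s * (n - (j + 1) * s).choose (k - j)))) atTop (nhds (∑ s ∈ Finset.Ico s1 s0, (0 : ℝ))) := by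
    refine tendsto_finsetSum _ fun s hs' => small_tendsto k j hjk b b1 hb hbb s ?_
    have : (s1 : ℝ) ≤ s := by exact_mod_cast (Finset.mem_Ico.1 hs').1
    nlinarith
  have h0 := hsmall.add hlarge
  rw [Finset.sum_const_zero, add_zero] at h0
  refine tendsto_of_tendsto_of_tendsto_of_le_of_le' tendsto_const_nhds h0
    (Eventually.of_forall fun n => measureReal_nonneg) ?_
  filter_upwards [hforb] with n hn
  have hsub : Bad k j s1 b b1 n ⊆
      (⋃ s ∈ Finset.Ico s1 s0, Ev n k j (pp (k - j) b n) (pp (k - j) b1 n) s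
        (s * (n - (j + 1) * s).choose (k - j))) ∪
      ⋃ s ∈ Finset.Icc s0 (n ^ (j + 1)), Ev n k j (pp (k - j) b n) (pp (k - j) b1 n) s
        ⌈c * s * (n : ℝ) ^ (k - j)⌉₊ := by
    rintro t ⟨p, hp0, hp1, S, hS, hN, hmin, hs1⟩
    by_cases h : S.card < s0
    · left
      simp only [Set.mem_iUnion]
      refine ⟨S.card, Finset.mem_Ico.2 ⟨hs1, h⟩, mem_Ev hj hp0 hp1 hS hN hmin hN.nonempty ?_⟩
      exact forb_small k j hjk S (fun σ hσ => (hS.simp σ hσ).2)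
    · right
      simp only [Set.mem_iUnion]
      exact ⟨S.card, Finset.mem_Icc.2 ⟨not_lt.1 h, card_obst_le hS⟩,
        mem_Ev hj hp0 hp1 hS hN hmin hN.nonempty (hn S (expansion complexAt_down hS hN hmin))⟩
  refine (measureReal_mono hsub (measure_ne_top _ _)).trans ((measureReal_union_le _ _).trans ?_)
  exact add_le_add (measureReal_biUnion_finset_le _ _) (measureReal_biUnion_finset_le _ _)


lemma one_sub_pow_le {p : ℝ} (h1 : p ≤ 1) (h : ℕ) : (1 - p) ^ h ≤ Real.exp (-(p * h)) := by
  have := Real.add_one_le_exp (-p)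
  calc (1 - p) ^ h ≤ (Real.exp (-p)) ^ h := pow_le_pow_left₀ (by linarith) (by linarith) h
    _ = Real.exp (-(p * h)) := by rw [← Real.exp_nat_mul]; congr 1; ring

/-- The simplices meeting `U` in a member of `S`. -/
noncomputable def extF {n : ℕ} (k : ℕ) (S : Finset (Finset (Fin n))) (U : Finset (Fin n)) :
    Finset (Finset (Fin n)) :=
  (Finset.powersetCard (k + 1) (Finset.univ : Finset (Fin n))).filter (fun K => K ∩ U ∈ S)

lemma real_extF_le {n : ℕ} (k j : ℕ) (hjk : j ≤ k) (S : Finset (Finset (Fin n))) (U : Finset (Fin n))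
    (hS : ∀ σ ∈ S, σ ⊆ U ∧ σ.card = j + 1) {p : ℝ} (h0 : 0 ≤ p) (h1 : p ≤ 1) :
    (birthMeasure n).real (box ∅ (extF k S U) p p) ≤
      Real.exp (-(p * (S.card * (n - U.card).choose (k - j) : ℕ))) := by
  rw [real_box (Finset.disjoint_empty_left _) h0 h1 h0 h1, Finset.card_empty, pow_zero, one_mul]
  refine le_trans ?_ (one_sub_pow_le h1 _)
  exact pow_le_pow_of_le_one (by linarith) (by linarith) (card_ext k j hjk S U hS)

/-- Event: some `j`-face is missing. -/
def NotFull (k j : ℕ) (b : ℝ) (n : ℕ) : Set (Finset (Fin n) → ℝ) :=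
  {t | ∃ σ : Finset (Fin n), σ.card = j + 1 ∧ σ ∉ complexAt k n t (pp (k - j) b n)}

lemma notMem_box {n k : ℕ} {t : Finset (Fin n) → ℝ} {p : ℝ} (S : Finset (Finset (Fin n)))
    (U : Finset (Fin n)) (hS : ∀ σ ∈ S, σ.Nonempty ∧ σ ∉ complexAt k n t p) :
    t ∈ box ∅ (extF k S U) p p := by
  refine ⟨by simp, fun K hK => ?_⟩
  obtain ⟨hK1, hK2⟩ := Finset.mem_filter.1 hK
  by_contra hcon
  push Not at hcon
  exact (hS _ hK2).2 (Or.inr ⟨(hS _ hK2).1, K, (Finset.mem_powersetCard.1 hK1).2, hcon,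
    Finset.inter_subset_left⟩)

lemma NotFull_tendsto (k j : ℕ) (hjk : j < k) (b : ℝ) (hb : (j : ℝ) + 1 < b) :
    Tendsto (fun n : ℕ => (birthMeasure n).real (NotFull k j b n)) atTop (nhds 0) := by
  have hb0 : 0 < b := lt_trans (by positivity) hb
  obtain ⟨η, hη1, hη2⟩ : ∃ η : ℝ, η < 1 ∧ (j : ℝ) + 1 < η * b := by
    obtain ⟨y, hy1, hy2⟩ := exists_between hb
    exact ⟨y / b, by rw [div_lt_one hb0]; exact hy2, by rw [div_mul_cancel₀ _ hb0.ne']; exact hy1⟩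
  have h0 := polylog 0 (η * b - (j + 1)) (by linarith)
  refine tendsto_of_tendsto_of_tendsto_of_le_of_le' tendsto_const_nhds h0
    (Eventually.of_forall fun n => measureReal_nonneg) ?_
  filter_upwards [choose_lower (j + 1) (k - j) η hη1, eventually_ge_atTop 1,
    pp_lt_one (k - j) (by omega) b] with n hc hn1 h1
  have hnn : (0 : ℝ) < n := by exact_mod_cast hn1
  have hL := Real.log_natCast_nonneg n
  have hsub : NotFull k j b n ⊆ ⋃ σ ∈ Finset.powersetCard (j + 1) (Finset.univ : Finset (Fin n)),
      box ∅ (extF k {σ} σ) (pp (k - j) b n) (pp (k - j) b n) := by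
    rintro t ⟨σ, hσ, hσ2⟩
    simp only [Set.mem_iUnion]
    refine ⟨σ, Finset.mem_powersetCard.2 ⟨Finset.subset_univ _, hσ⟩, notMem_box _ _ ?_⟩
    intro σ' hσ'
    rw [Finset.mem_singleton] at hσ'
    subst hσ'
    exact ⟨Finset.card_pos.1 (by omega), hσ2⟩
  have hterm : ∀ σ ∈ Finset.powersetCard (j + 1) (Finset.univ : Finset (Fin n)),
      (birthMeasure n).real (box ∅ (extF k {σ} σ) (pp (k - j) b n) (pp (k - j) b n)) ≤
        (n : ℝ) ^ (-(η * b)) := by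
    intro σ hσ
    have hσc := (Finset.mem_powersetCard.1 hσ).2
    refine (real_extF_le k j hjk.le {σ} σ (by simp [hσc]) (pp_nonneg _ hb0.le n) h1.le).trans ?_
    rw [← exp_log_rpow hn1, hσc, Finset.card_singleton, one_mul]
    refine Real.exp_le_exp.2 (neg_le_neg ?_)
    unfold pp
    rw [div_mul_eq_mul_div, le_div_iff₀ (by positivity)]
    calc η * b * Real.log n * n ^ (k - j) = (b * Real.log n) * (η * n ^ (k - j)) := by ring
      _ ≤ (b * Real.log n) * _ := mul_le_mul_of_nonneg_left hc (by positivity)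
      _ = _ := by ring
  refine (measureReal_mono hsub (measure_ne_top _ _)).trans ((measureReal_biUnion_finset_le _ _).trans
    ((Finset.sum_le_card_nsmul _ _ _ hterm).trans ?_))
  rw [nsmul_eq_mul, Finset.card_powersetCard, Finset.card_univ, Fintype.card_fin]
  have hcard : (n.choose (j + 1) : ℝ) ≤ (n : ℝ) ^ (j + 1) := by exact_mod_cast Nat.choose_le_pow _ _
  calc _ ≤ (n : ℝ) ^ (j + 1) * (n : ℝ) ^ (-(η * b)) := mul_le_mul_of_nonneg_right hcard (by positivity)
    _ = _ := by
      rw [← Real.rpow_natCast, ← Real.rpow_add hnn, pow_zero, one_mul]; congr 1; push_cast; ring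

/-- Event: the skeleton is not nearly complete. -/
def NotGood (k j : ℕ) (b : ℝ) (n : ℕ) : Set (Finset (Fin n) → ℝ) :=
  {t | ¬ Good (complexAt k n t (pp (k - j) b n)) j (n / (j + 2))}

lemma NotGood_bound (k j : ℕ) (hjk : j < k) {b : ℝ} (hb : 0 < b) {n : ℕ}
    (h1 : pp (k - j) b n ≤ 1) :
    (birthMeasure n).real (NotGood k j b n) ≤ 2 ^ n * 2 ^ n *
      Real.exp (-(pp (k - j) b n * ((n / (j + 2)) * (n - (n / (j + 2) + j)).choose (k - j) : ℕ))) := by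
  set m := n / (j + 2) with hm
  set I : Finset (Finset (Fin n) × Finset (Fin n)) :=
    Finset.univ.filter (fun x => x.1.card = m ∧ x.2.card = j ∧ Disjoint x.1 x.2) with hI
  have hsub : NotGood k j b n ⊆ ⋃ x ∈ I,
      box ∅ (extF k (x.1.image (fun a => insert a x.2)) (x.1 ∪ x.2)) (pp (k - j) b n) (pp (k - j) b n) := by
    intro t ht
    have ht' : ¬ Good (complexAt k n t (pp (k - j) b n)) j m := ht
    unfold Good at ht'
    push Not at ht'
    obtain ⟨B, hB, hlt⟩ := ht'
    obtain ⟨A, hA, hAc⟩ := Finset.exists_subset_card_eq hlt.le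
    simp only [Set.mem_iUnion]
    refine ⟨(A, B), Finset.mem_filter.2 ⟨Finset.mem_univ _, hAc, hB, ?_⟩, notMem_box _ _ ?_⟩
    · rw [Finset.disjoint_left]
      intro a ha
      exact (Finset.mem_filter.1 (hA ha)).2.1
    · intro σ hσ
      obtain ⟨a, ha, rfl⟩ := Finset.mem_image.1 hσ
      exact ⟨Finset.insert_nonempty _ _, (Finset.mem_filter.1 (hA ha)).2.2⟩
  have hterm : ∀ x ∈ I, (birthMeasure n).real
      (box ∅ (extF k (x.1.image (fun a => insert a x.2)) (x.1 ∪ x.2)) (pp (k - j) b n) (pp (k - j) b n)) ≤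
      Real.exp (-(pp (k - j) b n * (m * (n - (m + j)).choose (k - j) : ℕ))) := by
    rintro ⟨A, B⟩ hx
    obtain ⟨-, hA, hB, hd⟩ := Finset.mem_filter.1 hx
    simp only at hA hB hd ⊢
    have := real_extF_le k j hjk.le (A.image (fun a => insert a B)) (A ∪ B) (by
      intro σ hσ
      obtain ⟨a, ha, rfl⟩ := Finset.mem_image.1 hσ
      refine ⟨Finset.insert_subset (Finset.mem_union_left _ ha) Finset.subset_union_right, ?_⟩
      rw [Finset.card_insert_of_notMem (Finset.disjoint_left.1 hd ha), hB]) (pp_nonneg (k - j) hb.le n) h1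
    rw [Finset.card_union_of_disjoint hd, hA, hB, Finset.card_image_of_injOn, hA] at this
    · exact this
    · intro a ha a' ha' h
      have h' : insert a B = insert a' B := h
      have : a ∈ insert a' B := h' ▸ Finset.mem_insert_self a B
      rcases Finset.mem_insert.1 this with h | h
      · exact h
      · exact absurd h (Finset.disjoint_left.1 hd ha)
  refine (measureReal_mono hsub (measure_ne_top _ _)).trans ((measureReal_biUnion_finset_le _ _).trans
    ((Finset.sum_le_card_nsmul _ _ _ hterm).trans ?_))
  rw [nsmul_eq_mul]
  refine mul_le_mul_of_nonneg_right ?_ (by positivity)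
  have : I.card ≤ 2 ^ n * 2 ^ n := by
    refine (Finset.card_le_univ _).trans (le_of_eq ?_)
    rw [Fintype.card_prod, Fintype.card_finset, Fintype.card_fin]
  exact_mod_cast this

lemma NotGood_tendsto (k j : ℕ) (hj : 1 ≤ j) (hjk : j < k) (b : ℝ) (hb : 0 < b) :
    Tendsto (fun n : ℕ => (birthMeasure n).real (NotGood k j b n)) atTop (nhds 0) := by
  have hlog : Tendsto (fun n : ℕ => Real.log n) atTop atTop :=
    Real.tendsto_log_atTop.comp tendsto_natCast_atTop_atTop
  have hdiv : Tendsto (fun n : ℕ => n / 3) atTop atTop := Nat.tendsto_div_const_atTop (by norm_num)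
  have h0 : Tendsto (fun n : ℕ => Real.exp (-(n : ℝ))) atTop (nhds 0) :=
    Real.tendsto_exp_neg_atTop_nhds_zero.comp tendsto_natCast_atTop_atTop
  set c : ℝ := b * (1 / 2) * (1 / 6) ^ (k - j) * (1 / (2 * (j + 2))) with hc
  have hc0 : 0 < c := by positivity
  refine tendsto_of_tendsto_of_tendsto_of_le_of_le' tendsto_const_nhds h0
    (Eventually.of_forall fun n => measureReal_nonneg) ?_
  filter_upwards [hdiv.eventually (choose_lower 0 (k - j) (1 / 2) (by norm_num)),
    eventually_ge_atTop (6 * (j + 2)), pp_lt_one (k - j) (by omega) b,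
    hlog.eventually_ge_atTop (3 / c)] with n hch hn h1 hL
  refine (NotGood_bound k j hjk hb h1.le).trans ?_
  have hnn : (0 : ℝ) < n := by exact_mod_cast (by omega : 0 < n)
  have hLn := Real.log_natCast_nonneg n
  have hm3 : n / (j + 2) ≤ n / 3 := Nat.div_le_div_left (by omega) (by norm_num)
  have hm : (n : ℝ) * (1 / (2 * (j + 2))) ≤ ((n / (j + 2) : ℕ) : ℝ) := by
    have : n ≤ 2 * (j + 2) * (n / (j + 2)) := by
      have := Nat.div_add_mod n (j + 2)
      have h2 := Nat.mod_lt n (show 0 < j + 2 by omega)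
      nlinarith
    have : (n : ℝ) ≤ 2 * (j + 2) * ((n / (j + 2) : ℕ) : ℝ) := by exact_mod_cast this
    rw [mul_one_div, div_le_iff₀ (by positivity)]
    linarith
  have h6 : (n : ℝ) / 6 ≤ ((n / 3 : ℕ) : ℝ) := by
    have : n ≤ 6 * (n / 3) := by omega
    have : (n : ℝ) ≤ 6 * ((n / 3 : ℕ) : ℝ) := by exact_mod_cast this
    linarith
  have hch2 : 1 / 2 * ((n : ℝ) / 6) ^ (k - j) ≤
      (k - j).factorial * ((n - (n / (j + 2) + j)).choose (k - j) : ℝ) := by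
    calc _ ≤ 1 / 2 * (((n / 3 : ℕ) : ℝ)) ^ (k - j) := by gcongr
      _ ≤ _ := hch
      _ ≤ _ := by
        refine mul_le_mul_of_nonneg_left ?_ (Nat.cast_nonneg _)
        exact_mod_cast Nat.choose_le_choose (k - j) (by omega)
  have hmain : c * Real.log n * n ≤ pp (k - j) b n *
      ((n / (j + 2)) * (n - (n / (j + 2) + j)).choose (k - j) : ℕ) := by
    push_cast
    unfold pp
    rw [div_mul_eq_mul_div, le_div_iff₀ (by positivity)]
    calc c * Real.log n * n * n ^ (k - j) =
          b * Real.log n * (n * (1 / (2 * (j + 2)))) * (1 / 2 * ((n : ℝ) / 6) ^ (k - j)) := by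
          rw [hc, div_pow, div_pow]; ring
      _ ≤ b * Real.log n * ((n / (j + 2) : ℕ) : ℝ) *
          ((k - j).factorial * ((n - (n / (j + 2) + j)).choose (k - j) : ℝ)) := by gcongr
      _ = _ := by push_cast; ring
  have h4 : (2 : ℝ) ^ n * 2 ^ n ≤ Real.exp (2 * n) := by
    have : (2 : ℝ) ≤ Real.exp 1 := by have := Real.add_one_le_exp (1 : ℝ); linarith
    calc (2 : ℝ) ^ n * 2 ^ n ≤ (Real.exp 1) ^ n * (Real.exp 1) ^ n := by gcongr
      _ = _ := by rw [← Real.exp_nat_mul, ← Real.exp_add]; congr 1; ring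
  refine (mul_le_mul h4 (Real.exp_le_exp.2 (neg_le_neg hmain)) (by positivity) (by positivity)).trans ?_
  rw [← Real.exp_add]
  refine Real.exp_le_exp.2 ?_
  rw [div_le_iff₀ hc0] at hL
  nlinarith


/-! ### Second moment -/

lemma second_moment {Ω ι : Type*} [MeasurableSpace Ω] (μ : Measure Ω) [IsProbabilityMeasure μ]
    (I : Finset ι) (A : ι → Set Ω) (hA : ∀ i, MeasurableSet (A i)) (Q : ℝ)
    (hQ : ∀ i ∈ I, ∀ i' ∈ I, i ≠ i' → μ.real (A i ∩ A i') ≤ μ.real (A i) * μ.real (A i') * Q)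
    (hQ1 : 1 ≤ Q) (E : ℝ) (hE : E = ∑ i ∈ I, μ.real (A i)) (hE0 : 0 < E) :
    μ.real {x | ∀ i ∈ I, x ∉ A i} ≤ 1 / E + (Q - 1) := by
  set N : Set Ω := {x | ∀ i ∈ I, x ∉ A i} with hN
  have hNm : MeasurableSet N := by
    have : N = ⋂ i ∈ I, (A i)ᶜ := by ext x; simp [hN]
    rw [this]
    exact Finset.measurableSet_biInter _ fun i _ => (hA i).compl
  have hIntg : ∀ s : Set Ω, MeasurableSet s → Integrable (s.indicator (1 : Ω → ℝ)) μ := fun s hs =>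
    (integrable_const (1 : ℝ)).indicator hs
  have hval : ∀ s : Set Ω, MeasurableSet s → ∫ x, s.indicator (1 : Ω → ℝ) x ∂μ = μ.real s := fun s hs =>
    integral_indicator_one hs
  have hpt : ∀ x, E ^ 2 * N.indicator (1 : Ω → ℝ) x ≤
      (∑ i ∈ I, ∑ i' ∈ I, (A i ∩ A i').indicator (1 : Ω → ℝ) x) -
        2 * E * (∑ i ∈ I, (A i).indicator (1 : Ω → ℝ) x) + E ^ 2 := by
    intro x
    have e : (∑ i ∈ I, ∑ i' ∈ I, (A i ∩ A i').indicator (1 : Ω → ℝ) x) =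
        (∑ i ∈ I, (A i).indicator (1 : Ω → ℝ) x) ^ 2 := by
      rw [sq, Finset.sum_mul_sum]
      refine Finset.sum_congr rfl fun i _ => Finset.sum_congr rfl fun i' _ => ?_
      rw [Set.inter_indicator_one, Pi.mul_apply]
    rw [e]
    by_cases hx : x ∈ N
    · have : (∑ i ∈ I, (A i).indicator (1 : Ω → ℝ) x) = 0 :=
        Finset.sum_eq_zero fun i hi => Set.indicator_of_notMem (hx i hi) _
      rw [this, Set.indicator_of_mem hx]
      simp
    · rw [Set.indicator_of_notMem hx]
      nlinarith [sq_nonneg ((∑ i ∈ I, (A i).indicator (1 : Ω → ℝ) x) - E)]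
  have hi1 : Integrable (fun x => ∑ i ∈ I, ∑ i' ∈ I, (A i ∩ A i').indicator (1 : Ω → ℝ) x) μ :=
    integrable_finsetSum _ fun i _ => integrable_finsetSum _ fun i' _ => hIntg _ ((hA i).inter (hA i'))
  have hi2 : Integrable (fun x => ∑ i ∈ I, (A i).indicator (1 : Ω → ℝ) x) μ :=
    integrable_finsetSum _ fun i _ => hIntg _ (hA i)
  have hmono := integral_mono ((hIntg N hNm).const_mul (E ^ 2))
    ((hi1.sub (hi2.const_mul (2 * E))).add (integrable_const (E ^ 2))) hpt
  rw [integral_const_mul, hval N hNm] at hmono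
  have hi3 : Integrable (fun x => (∑ i ∈ I, ∑ i' ∈ I, (A i ∩ A i').indicator (1 : Ω → ℝ) x) -
        2 * E * (∑ i ∈ I, (A i).indicator (1 : Ω → ℝ) x)) μ := hi1.sub (hi2.const_mul (2 * E))
  have hcalc : ∫ x, ((∑ i ∈ I, ∑ i' ∈ I, (A i ∩ A i').indicator (1 : Ω → ℝ) x) -
        2 * E * (∑ i ∈ I, (A i).indicator (1 : Ω → ℝ) x) + E ^ 2) ∂μ =
      (∑ i ∈ I, ∑ i' ∈ I, μ.real (A i ∩ A i')) - 2 * E * E + E ^ 2 := by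
    rw [integral_add hi3 (integrable_const _),
      integral_sub hi1 (hi2.const_mul (2 * E)), integral_const_mul,
      integral_finsetSum _ (fun i _ => integrable_finsetSum _ fun i' _ => hIntg _ ((hA i).inter (hA i'))),
      integral_finsetSum _ (fun i _ => hIntg _ (hA i))]
    congr 1
    · congr 1
      · refine Finset.sum_congr rfl fun i _ => ?_
        rw [integral_finsetSum _ (fun i' _ => hIntg _ ((hA i).inter (hA i')))]
        exact Finset.sum_congr rfl fun i' _ => hval _ ((hA i).inter (hA i'))
      · rw [hE]
        congr 1
        exact Finset.sum_congr rfl fun i _ => hval _ (hA i)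
    · simp
  have hsum : (∑ i ∈ I, ∑ i' ∈ I, μ.real (A i ∩ A i')) ≤ E + E ^ 2 * Q := by
    have : E + E ^ 2 * Q = ∑ i ∈ I, (μ.real (A i) + ∑ i' ∈ I, μ.real (A i) * μ.real (A i') * Q) := by
      rw [Finset.sum_add_distrib, ← hE]
      congr 1
      rw [sq]
      nth_rewrite 1 [hE]
      rw [hE, Finset.sum_mul_sum, Finset.sum_mul]
      refine Finset.sum_congr rfl fun i _ => ?_
      rw [Finset.sum_mul]
    rw [this]
    refine Finset.sum_le_sum fun i hi => ?_
    rw [← Finset.add_sum_erase _ _ hi, Set.inter_self]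
    refine add_le_add le_rfl ?_
    refine (Finset.sum_le_sum (fun i' hi' => hQ i hi i' (Finset.mem_of_mem_erase hi')
      (Finset.ne_of_mem_erase hi').symm)).trans ?_
    refine Finset.sum_le_sum_of_subset_of_nonneg (Finset.erase_subset _ _) fun i' _ _ => ?_
    have := measureReal_nonneg (μ := μ) (s := A i)
    have := measureReal_nonneg (μ := μ) (s := A i')
    positivity
  have hfin : E ^ 2 * μ.real N ≤ E + E ^ 2 * (Q - 1) := by
    refine hmono.trans ?_
    refine le_trans (le_of_eq hcalc) ?_
    nlinarith
  have : E ^ 2 * μ.real N ≤ E ^ 2 * (1 / E + (Q - 1)) := by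
    refine hfin.trans (le_of_eq ?_)
    field_simp
  exact le_of_mul_le_mul_left this (by positivity)

section minus
variable {n : ℕ}

/-- Choice of the centre. -/
noncomputable def ctr (j : ℕ) (K : Finset (Fin n)) : Finset (Fin n) :=
  if h : j ≤ K.card then Classical.choose (Finset.exists_subset_card_eq h) else ∅

lemma ctr_spec {j : ℕ} {K : Finset (Fin n)} (h : j ≤ K.card) : ctr j K ⊆ K ∧ (ctr j K).card = j := by
  unfold ctr
  rw [dif_pos h]
  exact Classical.choose_spec (Finset.exists_subset_card_eq h)

/-- Simplices which must be absent. -/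
noncomputable def blk (k j : ℕ) (K : Finset (Fin n)) : Finset (Finset (Fin n)) :=
  (Finset.powersetCard (k + 1) Finset.univ).filter
    (fun K' => K' ≠ K ∧ ∃ w ∈ K \ ctr j K, insert w (ctr j K) ⊆ K')

lemma isMjMinus_of_box {k j : ℕ} (hj : 1 ≤ j) (hjk : j < k) {t : Finset (Fin n) → ℝ} {p : ℝ}
    {K : Finset (Fin n)} (hK : K.card = k + 1) (ht : t ∈ box {K} (blk k j K) p p) :
    IsMjMinus (complexAt k n t p) k j K (ctr j K) := by
  have hc := ctr_spec (j := j) (K := K) (by omega)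
  have htK : t K ≤ p := ht.1 K (Finset.mem_singleton_self K)
  refine ⟨(isSimplex_complexAt (by omega)).2 ⟨hK, htK⟩,
    Or.inr ⟨Finset.card_pos.1 (by omega), K, hK, htK, hc.1⟩, hc.2, hc.1, ?_⟩
  rintro P ⟨w, hw, rfl⟩ K' hK' hP
  rw [isSimplex_complexAt (by omega)] at hK'
  by_contra hne
  have : K' ∈ blk k j K := Finset.mem_filter.2
    ⟨Finset.mem_powersetCard.2 ⟨Finset.subset_univ _, hK'.1⟩, hne, w, hw, hP⟩
  exact absurd hK'.2 (not_le.2 (ht.2 K' this))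

lemma card_blk_le (k j : ℕ) (hjk : j < k) {K : Finset (Fin n)} (hK : K.card = k + 1) :
    (blk k j K).card ≤ (k - j + 1) * n.choose (k - j) := by
  have hc := ctr_spec (j := j) (K := K) (by omega)
  have hsub : blk k j K ⊆ (K \ ctr j K).biUnion (fun w =>
      (Finset.powersetCard (k + 1) (Finset.univ : Finset (Fin n))).filter
        (fun K' => insert w (ctr j K) ⊆ K')) := by
    intro K' hK'
    obtain ⟨h1, -, w, hw, h2⟩ := Finset.mem_filter.1 hK'
    exact Finset.mem_biUnion.2 ⟨w, hw, Finset.mem_filter.2 ⟨h1, h2⟩⟩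
  refine (Finset.card_le_card hsub).trans ?_
  have : (K \ ctr j K).card = k - j + 1 := by
    rw [Finset.card_sdiff_of_subset hc.1, hK, hc.2]; omega
  rw [← this]
  refine Finset.card_biUnion_le_card_mul _ _ _ fun w hw => ?_
  have h2 := card_superset_le (insert w (ctr j K)) (k + 1) (j + 1) (by
    rw [Finset.card_insert_of_notMem (Finset.mem_sdiff.1 hw).2, hc.2])
  rwa [Nat.add_sub_add_right] at h2

lemma card_blk_inter_le (k j : ℕ) (hjk : j < k) {K K' : Finset (Fin n)} (hK : K.card = k + 1)
    (hK' : K'.card = k + 1) (hne : K' ≠ K) (hb : K' ∉ blk k j K) :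
    (blk k j K ∩ blk k j K').card ≤ (k + 1) * (k + 1) * n ^ (k - j - 1) := by
  have hc := ctr_spec (j := j) (K := K) (by omega)
  have hc' := ctr_spec (j := j) (K := K') (by omega)
  have hsub : blk k j K ∩ blk k j K' ⊆ ((K \ ctr j K) ×ˢ (K' \ ctr j K')).biUnion (fun w =>
      (Finset.powersetCard (k + 1) (Finset.univ : Finset (Fin n))).filter
        (fun K'' => insert w.1 (ctr j K) ∪ insert w.2 (ctr j K') ⊆ K'')) := by
    intro K'' hK''
    rw [Finset.mem_inter] at hK''
    obtain ⟨h1, -, w, hw, h2⟩ := Finset.mem_filter.1 hK''.1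
    obtain ⟨-, -, w', hw', h2'⟩ := Finset.mem_filter.1 hK''.2
    exact Finset.mem_biUnion.2 ⟨(w, w'), Finset.mem_product.2 ⟨hw, hw'⟩,
      Finset.mem_filter.2 ⟨h1, Finset.union_subset h2 h2'⟩⟩
  refine (Finset.card_le_card hsub).trans ?_
  have hcard : ((K \ ctr j K) ×ˢ (K' \ ctr j K')).card ≤ (k + 1) * (k + 1) := by
    rw [Finset.card_product]
    exact Nat.mul_le_mul (hK ▸ Finset.card_le_card Finset.sdiff_subset)
      (hK' ▸ Finset.card_le_card Finset.sdiff_subset)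
  refine le_trans ?_ (Nat.mul_le_mul_right _ hcard)
  refine Finset.card_biUnion_le_card_mul _ _ _ fun w hw => ?_
  obtain ⟨hw1, hw2⟩ := Finset.mem_product.1 hw
  have c1 : (insert w.1 (ctr j K)).card = j + 1 := by
    rw [Finset.card_insert_of_notMem (Finset.mem_sdiff.1 hw1).2, hc.2]
  have c2 : (insert w.2 (ctr j K')).card = j + 1 := by
    rw [Finset.card_insert_of_notMem (Finset.mem_sdiff.1 hw2).2, hc'.2]
  have s2 : insert w.2 (ctr j K') ⊆ K' := Finset.insert_subset (Finset.mem_sdiff.1 hw2).1 hc'.1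
  have hcu : j + 2 ≤ (insert w.1 (ctr j K) ∪ insert w.2 (ctr j K')).card := by
    by_contra hlt
    push Not at hlt
    have e2 : insert w.2 (ctr j K') = insert w.1 (ctr j K) ∪ insert w.2 (ctr j K') :=
      Finset.eq_of_subset_of_card_le Finset.subset_union_right (by omega)
    refine hb (Finset.mem_filter.2 ⟨Finset.mem_powersetCard.2 ⟨Finset.subset_univ _, hK'⟩, hne, w.1, hw1, ?_⟩)
    refine Finset.Subset.trans ?_ s2
    rw [e2]
    exact Finset.subset_union_left
  obtain ⟨ρ, hρ, hρc⟩ := Finset.exists_subset_card_eq hcu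
  have h2 := card_superset_le ρ (k + 1) (j + 2) hρc
  have e : k + 1 - (j + 2) = k - j - 1 := by omega
  rw [e] at h2
  refine le_trans (Finset.card_le_card ?_) (h2.trans (Nat.choose_le_pow _ _))
  intro K'' hK''
  rw [Finset.mem_filter] at hK'' ⊢
  exact ⟨hK''.1, hρ.trans hK''.2⟩

lemma pair_bound (k j : ℕ) (hjk : j < k) {K K' : Finset (Fin n)} (hK : K.card = k + 1)
    (hK' : K'.card = k + 1) (hne : K ≠ K') {p : ℝ} (h0 : 0 ≤ p) (h1 : p < 1) :
    (birthMeasure n).real (box {K} (blk k j K) p p ∩ box {K'} (blk k j K') p p) ≤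
      (birthMeasure n).real (box {K} (blk k j K) p p) * (birthMeasure n).real (box {K'} (blk k j K') p p)
        * (1 / (1 - p) ^ ((k + 1) * (k + 1) * n ^ (k - j - 1))) := by
  have hself : ∀ L : Finset (Fin n), L ∉ blk k j L := fun L h => (Finset.mem_filter.1 h).2.1 rfl
  have hpos : 0 < 1 - p := by linarith
  rw [real_box (Finset.disjoint_singleton_left.2 (hself K)) h0 h1.le h0 h1.le,
    real_box (Finset.disjoint_singleton_left.2 (hself K')) h0 h1.le h0 h1.le]
  by_cases hb : K' ∈ blk k j K ∨ K ∈ blk k j K'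
  · have : box {K} (blk k j K) p p ∩ box {K'} (blk k j K') p p = ∅ := by
      ext t
      simp only [Set.mem_inter_iff, Set.mem_empty_iff_false, iff_false]
      rintro ⟨ha, hb'⟩
      rcases hb with h | h
      · exact absurd (hb'.1 K' (Finset.mem_singleton_self _)) (not_le.2 (ha.2 K' h))
      · exact absurd (ha.1 K (Finset.mem_singleton_self _)) (not_le.2 (hb'.2 K h))
    rw [this, measureReal_empty]
    positivity
  · push Not at hb
    have : box {K} (blk k j K) p p ∩ box {K'} (blk k j K') p p =
        box {K, K'} (blk k j K ∪ blk k j K') p p := by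
      ext t
      simp only [box, Set.mem_inter_iff, Set.mem_ofPred_eq, Finset.mem_singleton, Finset.mem_insert,
        Finset.mem_union, forall_eq, or_imp, forall_and]
      tauto
    rw [this, real_box _ h0 h1.le h0 h1.le, Finset.card_pair hne, Finset.card_singleton, Finset.card_singleton]
    · have hi := card_blk_inter_le k j hjk hK hK' hne.symm hb.1
      have hu := Finset.card_union_add_card_inter (blk k j K) (blk k j K')
      rw [mul_one_div, le_div_iff₀ (by positivity)]
      calc p ^ 2 * (1 - p) ^ (blk k j K ∪ blk k j K').card * (1 - p) ^ ((k + 1) * (k + 1) * n ^ (k - j - 1))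
          ≤ p ^ 2 * (1 - p) ^ (blk k j K ∪ blk k j K').card * (1 - p) ^ (blk k j K ∩ blk k j K').card := by
            refine mul_le_mul_of_nonneg_left ?_ (by positivity)
            exact pow_le_pow_of_le_one hpos.le (by linarith) hi
        _ = p ^ 2 * (1 - p) ^ ((blk k j K).card + (blk k j K').card) := by
            rw [mul_assoc, ← pow_add, hu]
        _ = _ := by ring
    · rw [Finset.disjoint_left]
      intro L hL
      rw [Finset.mem_insert, Finset.mem_singleton] at hL
      rw [Finset.mem_union]
      rcases hL with rfl | rfl
      · exact fun h => h.elim (hself L) hb.2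
      · exact fun h => h.elim hb.1 (hself L)

end minus


/-- Event: no copy of `M_j^-`. -/
def NoMinus (k j : ℕ) (b : ℝ) (n : ℕ) : Set (Finset (Fin n) → ℝ) :=
  {t | ¬ ∃ K C, IsMjMinus (complexAt k n t (pp (k - j) b n)) k j K C}

lemma one_sub_pow_ge {p ε : ℝ} (hp0 : 0 ≤ p) (hε : 1 ≤ (1 + ε) * (1 - p)) (hp : p < 1) (B : ℕ) :
    Real.exp (-((1 + ε) * (p * B))) ≤ (1 - p) ^ B := by
  have hpos : 0 < 1 - p := by linarith
  have h1 : Real.exp (-((1 + ε) * p)) ≤ 1 - p := by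
    rw [← Real.le_log_iff_exp_le hpos]
    refine le_trans ?_ (Real.one_sub_inv_le_log_of_pos hpos)
    have : (1 - p)⁻¹ ≤ 1 + ε := by
      rw [inv_le_iff_one_le_mul₀ hpos]; exact hε
    have e : 1 - (1 - p)⁻¹ = -((1 - p)⁻¹ * p) := by field_simp; ring
    rw [e]
    nlinarith
  calc Real.exp (-((1 + ε) * (p * B))) = (Real.exp (-((1 + ε) * p))) ^ B := by
        rw [← Real.exp_nat_mul]; congr 1; ring
    _ ≤ _ := pow_le_pow_left₀ (by positivity) h1 B

lemma NoMinus_bound {n : ℕ} (k j : ℕ) (hj : 1 ≤ j) (hjk : j < k) {b : ℝ} (hb : 0 < b) (hn : k + 1 ≤ n)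
    (hn2 : 2 ≤ n) (h1 : pp (k - j) b n < 1) {E0 q : ℝ} (hE0 : 0 < E0)
    (hE : E0 ≤ n.choose (k + 1) * (pp (k - j) b n *
      (1 - pp (k - j) b n) ^ ((k - j + 1) * n.choose (k - j))))
    (hq : q = ((k + 1) * (k + 1) * n ^ (k - j - 1) : ℕ) * pp (k - j) b n) (hq1 : q < 1) :
    (birthMeasure n).real (NoMinus k j b n) ≤ 1 / E0 + (1 / (1 - q) - 1) := by
  set p := pp (k - j) b n with hp
  have hp0 : 0 ≤ p := pp_nonneg _ hb.le n
  have hpos : 0 < 1 - p := by linarith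
  set D := (k + 1) * (k + 1) * n ^ (k - j - 1) with hD
  have hQ1 : 1 ≤ 1 / (1 - p) ^ D := by
    rw [le_div_iff₀ (by positivity), one_mul]
    exact pow_le_one₀ hpos.le (by linarith)
  have hmeas : ∀ K ∈ Finset.powersetCard (k + 1) (Finset.univ : Finset (Fin n)),
      p * (1 - p) ^ ((k - j + 1) * n.choose (k - j)) ≤ (birthMeasure n).real (box {K} (blk k j K) p p) := by
    intro K hK
    rw [real_box (Finset.disjoint_singleton_left.2 (fun h => (Finset.mem_filter.1 h).2.1 rfl))
      hp0 h1.le hp0 h1.le, Finset.card_singleton, pow_one]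
    refine mul_le_mul_of_nonneg_left ?_ hp0
    exact pow_le_pow_of_le_one hpos.le (by linarith) (card_blk_le k j hjk (Finset.mem_powersetCard.1 hK).2)
  have hEE : E0 ≤ ∑ K ∈ Finset.powersetCard (k + 1) (Finset.univ : Finset (Fin n)),
      (birthMeasure n).real (box {K} (blk k j K) p p) := by
    refine hE.trans (le_trans (le_of_eq ?_) (Finset.card_nsmul_le_sum _ _ _ hmeas))
    rw [nsmul_eq_mul, Finset.card_powersetCard, Finset.card_univ, Fintype.card_fin]
  have hsm := second_moment (birthMeasure n) (Finset.powersetCard (k + 1) (Finset.univ : Finset (Fin n)))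
    (fun K => box {K} (blk k j K) p p) (fun K => measurableSet_box _ _ _ _) (1 / (1 - p) ^ D)
    (fun K hK K' hK' hne => pair_bound k j hjk (Finset.mem_powersetCard.1 hK).2
      (Finset.mem_powersetCard.1 hK').2 hne hp0 h1) hQ1 _ rfl (hE0.trans_le hEE)
  refine le_trans (measureReal_mono ?_ (measure_ne_top _ _)) (hsm.trans ?_)
  · intro t ht K hK hbox
    exact ht ⟨K, _, isMjMinus_of_box hj hjk (Finset.mem_powersetCard.1 hK).2 hbox⟩
  · refine add_le_add (one_div_le_one_div_of_le hE0 hEE) (sub_le_sub_right ?_ 1)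
    refine one_div_le_one_div_of_le (by linarith) ?_
    have := one_add_mul_le_pow (a := -p) (by linarith) D
    calc 1 - q = 1 + D * -p := by rw [hq]; ring
      _ ≤ (1 + -p) ^ D := this
      _ = _ := by rw [← sub_eq_add_neg]

lemma NoMinus_tendsto (k j : ℕ) (hj : 1 ≤ j) (hjk : j < k) (b : ℝ) (hb : 0 < b)
    (hbj : b * ((k - j : ℕ) + 1) < (j : ℝ) + 1) :
    Tendsto (fun n : ℕ => (birthMeasure n).real (NoMinus k j b n)) atTop (nhds 0) := by
  set d := k - j with hd
  have hd1 : 1 ≤ d := by omega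
  have hbd : 0 < b * ((d : ℝ) + 1) := by positivity
  obtain ⟨ε, hε0, hε⟩ : ∃ ε : ℝ, 0 < ε ∧ (1 + ε) * (b * ((d : ℝ) + 1)) < (j : ℝ) + 1 := by
    obtain ⟨y, hy1, hy2⟩ := exists_between hbj
    refine ⟨y / (b * (d + 1)) - 1, ?_, ?_⟩
    · rw [sub_pos, one_lt_div hbd]; exact hy1
    · rw [add_sub_cancel, div_mul_cancel₀ _ hbd.ne']; exact hy2
  set δ : ℝ := (j : ℝ) + 1 - (1 + ε) * (b * ((d : ℝ) + 1)) with hδ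
  have hδ0 : 0 < δ := by linarith
  have hlog : Tendsto (fun n : ℕ => Real.log n) atTop atTop :=
    Real.tendsto_log_atTop.comp tendsto_natCast_atTop_atTop
  have hf : (0 : ℝ) < d.factorial := by exact_mod_cast Nat.factorial_pos _
  have hf' : (0 : ℝ) < (k + 1).factorial := by exact_mod_cast Nat.factorial_pos _
  set c : ℝ := 1 / 2 / (k + 1).factorial * (b * d.factorial) with hc
  have hc0 : 0 < c := by positivity
  -- the error term
  set C3 : ℝ := (k + 1) * (k + 1) * (b * d.factorial) with hC3
  have hq := (polylog 1 1 one_pos).const_mul C3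
  rw [mul_zero] at hq
  have hlim1 : Tendsto (fun n : ℕ => 1 / (c * (n : ℝ) ^ δ)) atTop (nhds 0) := by
    have := ((tendsto_rpow_atTop hδ0).comp tendsto_natCast_atTop_atTop).const_mul_atTop hc0
    refine (tendsto_inv_atTop_zero.comp this).congr fun n => ?_
    simp [Function.comp]
  have hlim2 : Tendsto (fun n : ℕ => 1 / (1 - C3 * (Real.log n ^ 1 * (n : ℝ) ^ (-(1 : ℝ)))) - 1) atTop
      (nhds (1 / (1 - 0) - 1)) :=
    (tendsto_const_nhds.div (tendsto_const_nhds.sub hq) (by norm_num)).sub tendsto_const_nhds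
  have h0 := hlim1.add hlim2
  norm_num at h0
  refine tendsto_of_tendsto_of_tendsto_of_le_of_le' tendsto_const_nhds h0
    (Eventually.of_forall fun n => measureReal_nonneg) ?_
  have hpε : ∀ᶠ n in atTop, pp d b n < ε / (1 + ε) :=
    (pp_tendsto d hd1 b).eventually (gt_mem_nhds (by positivity))
  filter_upwards [hpε, pp_lt_one d hd1 b, choose_lower 0 (k + 1) (1 / 2) (by norm_num),
    eventually_ge_atTop (k + 2), hlog.eventually_ge_atTop 1, hq.eventually (gt_mem_nhds one_pos)]
    with n hpe h1 hch hn hL hq1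
  have hnn : (0 : ℝ) < n := by exact_mod_cast (by omega : 0 < n)
  have hp0 : 0 ≤ pp d b n := pp_nonneg _ hb.le n
  have hqe : C3 * (Real.log n ^ 1 * (n : ℝ) ^ (-(1 : ℝ))) =
      ((k + 1) * (k + 1) * n ^ (k - j - 1) : ℕ) * pp (k - j) b n := by
    rw [← hd]
    unfold pp
    push_cast
    have e : (n : ℝ) ^ d = n ^ (d - 1) * n := by rw [← pow_succ]; congr 1; omega
    rw [e, Real.rpow_neg_one, hC3]
    field_simp
  have hEb : c * (n : ℝ) ^ δ ≤ n.choose (k + 1) * (pp (k - j) b n *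
      (1 - pp (k - j) b n) ^ ((k - j + 1) * n.choose (k - j))) := by
    rw [← hd]
    have hB : pp d b n * ((d + 1) * n.choose d : ℕ) ≤ b * ((d : ℝ) + 1) * Real.log n := by
      have h2 := Nat.choose_le_pow_div (α := ℝ) d n
      rw [le_div_iff₀ hf] at h2
      unfold pp
      push_cast
      rw [div_mul_eq_mul_div, div_le_iff₀ (by positivity)]
      calc b * d.factorial * Real.log n * ((d + 1) * (n.choose d : ℝ)) =
            b * (d + 1) * Real.log n * ((n.choose d : ℝ) * d.factorial) := by ring
        _ ≤ _ := mul_le_mul_of_nonneg_left h2 (by positivity)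
    have hpw : (n : ℝ) ^ (-((1 + ε) * (b * ((d : ℝ) + 1)))) ≤ (1 - pp d b n) ^ ((d + 1) * n.choose d) := by
      refine le_trans ?_ (one_sub_pow_ge (ε := ε) hp0 ?_ h1 _)
      · rw [← exp_log_rpow (by omega)]
        refine Real.exp_le_exp.2 (neg_le_neg ?_)
        rw [mul_assoc]
        exact mul_le_mul_of_nonneg_left hB (by positivity)
      · rw [lt_div_iff₀ (by positivity)] at hpe
        linarith
    have hch' : 1 / 2 / (k + 1).factorial * (n : ℝ) ^ (k + 1) ≤ n.choose (k + 1) := by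
      rw [div_mul_eq_mul_div, div_le_iff₀ hf']
      rw [Nat.sub_zero] at hch
      linarith
    have e2 : (n : ℝ) ^ (k + 1) * pp d b n = b * d.factorial * Real.log n * n ^ (j + 1) := by
      rw [← pp_mul_pow d b (by omega : 1 ≤ n)]
      have : (n : ℝ) ^ (k + 1) = n ^ d * n ^ (j + 1) := by
        rw [← pow_add]; congr 1; omega
      rw [this]; ring
    have e3 : (n : ℝ) ^ δ = (n : ℝ) ^ (j + 1) * (n : ℝ) ^ (-((1 + ε) * (b * ((d : ℝ) + 1)))) := by
      rw [← Real.rpow_natCast, ← Real.rpow_add hnn, hδ]; congr 1; push_cast; ring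
    calc c * (n : ℝ) ^ δ ≤ c * Real.log n * (n : ℝ) ^ δ := by
          refine mul_le_mul_of_nonneg_right ?_ (by positivity)
          nlinarith
      _ = 1 / 2 / (k + 1).factorial * ((b * d.factorial * Real.log n * n ^ (j + 1)) *
          (n : ℝ) ^ (-((1 + ε) * (b * ((d : ℝ) + 1))))) := by rw [e3, hc]; ring
      _ = (1 / 2 / (k + 1).factorial * (n : ℝ) ^ (k + 1)) * (pp d b n *
          (n : ℝ) ^ (-((1 + ε) * (b * ((d : ℝ) + 1))))) := by rw [← e2]; ring
      _ ≤ _ := by gcongr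
  refine (NoMinus_bound k j hj hjk hb (by omega) (by omega) h1 (by positivity) hEb hqe hq1).trans
    (le_of_eq ?_)
  norm_num


/-! ### The main theorem -/

lemma right_cont {n : ℕ} (k : ℕ) (t : Finset (Fin n) → ℝ) {p : ℝ} (hp : p < 1) :
    ∃ q, p < q ∧ q ≤ 1 ∧ complexAt k n t q = complexAt k n t p := by
  have h1 : ∀ K, ∀ᶠ q in nhdsWithin p (Set.Ioi p), p < t K → q < t K := by
    intro K
    by_cases h : p < t K
    · filter_upwards [mem_nhdsWithin_of_mem_nhds (gt_mem_nhds h)] with q hq _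
      exact hq
    · exact Eventually.of_forall fun q h' => absurd h' h
  have h2 : ∀ᶠ q in nhdsWithin p (Set.Ioi p), ∀ K, p < t K → q < t K := eventually_all.2 h1
  have h3 : ∀ᶠ q in nhdsWithin p (Set.Ioi p), q < 1 := mem_nhdsWithin_of_mem_nhds (gt_mem_nhds hp)
  have h4 : ∀ᶠ q in nhdsWithin p (Set.Ioi p), p < q := self_mem_nhdsWithin
  obtain ⟨q, ⟨hq2, hq3⟩, hq4⟩ := ((h2.and h3).and h4).exists
  refine ⟨q, hq4, hq3.le, Set.Subset.antisymm ?_ (complexAt_mono hq4.le)⟩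
  rintro A (hA | ⟨hA, K, hK, ht, hAK⟩)
  · exact Or.inl hA
  · refine Or.inr ⟨hA, K, hK, ?_, hAK⟩
    by_contra hcon
    exact absurd ht (not_le.2 (hq2 K (not_le.1 hcon)))

lemma le_pMj {n k j : ℕ} {t : Finset (Fin n) → ℝ} {p : ℝ} (h0 : 0 ≤ p) (h1 : p ≤ 1)
    (h : ∃ K C J, IsMj (complexAt k n t p) k j K C J) : p ≤ pMj k j n t :=
  le_csSup ⟨1, fun _ hx => hx.1.2⟩ ⟨⟨h0, h1⟩, h⟩

lemma Good.mono {V : Type*} [Fintype V] [DecidableEq V] {G G' : Set (Finset V)} {j m : ℕ}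
    (h : Good G j m) (hG : G ⊆ G') : Good G' j m := by
  intro B hB
  refine (Finset.card_le_card ?_).trans (h B hB)
  intro a ha
  rw [Finset.mem_filter] at ha ⊢
  exact ⟨ha.1, ha.2.1, fun h' => ha.2.2 (hG h')⟩

lemma det_part {n k j : ℕ} (hj : 1 ≤ j) (hjk : j < k) {b b1 : ℝ} (hb : 0 < b) (hbb : b ≤ b1)
    (hp1 : pp (k - j) b1 n < 1) (hn : (j + 1) * (n / (j + 2)) + (k + 1) + (j + 1) < n)
    {t : Finset (Fin n) → ℝ}
    (h1 : t ∉ NotGood k j b n) (h2 : t ∉ NoMinus k j b n) (h3 : t ∉ Bad k j (k - j + 2) b b1 n)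
    (h4 : t ∉ Bad k j 1 b1 b1 n) (h5 : t ∉ NotFull k j b1 n) (p : ℝ) (hp : pMj k j n t ≤ p) :
    CohomConnected (complexAt k n t p) j := by
  have hgood : Good (complexAt k n t (pp (k - j) b n)) j (n / (j + 2)) := not_not.1 h1
  have hcard : (j + 1) * (n / (j + 2)) + (k + 1) + (j + 1) < Fintype.card (Fin n) := by
    rwa [Fintype.card_fin]
  have hpb : pp (k - j) b n ≤ 1 := (pp_mono _ hbb n).trans hp1.le
  obtain ⟨K, C, hKC⟩ := not_not.1 h2
  obtain ⟨J, hJ⟩ := hgood.isMj complexAt_down hjk hcard hKC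
  have hp0 : pp (k - j) b n ≤ p := (le_pMj (pp_nonneg _ hb.le n) hpb ⟨K, C, J, hJ⟩).trans hp
  have hg : Good (complexAt k n t p) j (n / (j + 2)) := hgood.mono (complexAt_mono hp0)
  have hvan : ∀ i, i < j → Van (complexAt k n t p) i := fun i hi =>
    hg.van_lt complexAt_down (by omega) i hi
  have hvanj : Van (complexAt k n t p) j := by
    by_cases hpp : p ≤ pp (k - j) b1 n
    · by_contra hcon
      obtain ⟨S, hS, hN, hmin⟩ := exists_min_obst complexAt_down hcon
      have hlt : S.card < k - j + 2 := by
        by_contra hc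
        exact h3 ⟨p, hp0, hpp, S, hS, hN, hmin, not_lt.1 hc⟩
      obtain ⟨K, C, hM⟩ := flower_of_small hj hjk hS hN.nonempty (by omega)
      obtain ⟨J, hJ⟩ := hg.isMj complexAt_down hjk hcard hM
      obtain ⟨q, hq1, hq2, hq3⟩ := right_cont k t (hpp.trans_lt hp1)
      have : q ≤ pMj k j n t := le_pMj (((pp_nonneg _ hb.le n).trans hp0).trans hq1.le) hq2
        ⟨K, C, J, hq3 ▸ hJ⟩
      linarith
    · have hle : pp (k - j) b1 n ≤ p := (not_le.1 hpp).le
      have hv1 : Van (complexAt k n t (pp (k - j) b1 n)) j := by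
        by_contra hcon
        obtain ⟨S, hS, hN, hmin⟩ := exists_min_obst complexAt_down hcon
        exact h4 ⟨_, le_rfl, le_rfl, S, hS, hN, hmin, Finset.card_pos.2 hN.nonempty⟩
      intro F hF
      obtain ⟨g, hg⟩ := hv1 F fun R hR hRc => hF R (complexAt_mono hle hR) hRc
      refine ⟨g, fun σ _ hσc => hg σ ?_ hσc⟩
      by_contra hcon
      exact h5 ⟨σ, hσc, hcon⟩
  refine ⟨?_, fun i hi hij => ?_⟩
  · exact h0_of_van _ (⟨0, by omega⟩ : Fin n) complexAt_sing (hvan 0 hj)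
  · refine subsingleton_of_van _ complexAt_down i hi ?_
    rcases hij.lt_or_eq with h | h
    · exact hvan i h
    · rw [h]; exact hvanj


/-- Theorem 1.5(iii): whp, for all `p ≥ p_{M_j}` simultaneously, `G_p` is
`F₂`-cohomologically `j`-connected. -/
theorem statement2 (k j : ℕ) (hk : 2 ≤ k) (hj : 1 ≤ j) (hjk : j < k) :
    Tendsto (fun n : ℕ => birthMeasure n {t : Finset (Fin n) → ℝ |
      ∀ p : ℝ, pMj k j n t ≤ p → CohomConnected (complexAt k n t p) j})
      atTop (nhds 1) := by
  have hd1 : 1 ≤ k - j := by omega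
  set b : ℝ := ((j : ℝ) + 1) / ((k - j : ℕ) + 3 / 2) with hb
  set b1 : ℝ := (j : ℝ) + 2 with hb1
  have hdp : (0 : ℝ) < ((k - j : ℕ) : ℝ) + 3 / 2 := by positivity
  have hb0 : 0 < b := by positivity
  have hbm : b * (((k - j : ℕ) : ℝ) + 3 / 2) = (j : ℝ) + 1 := div_mul_cancel₀ _ hdp.ne'
  have hbb : b ≤ b1 := by
    rw [hb, div_le_iff₀ hdp, hb1]
    have h1 : (0 : ℝ) ≤ ((k - j : ℕ) : ℝ) := Nat.cast_nonneg _
    have h2 : (0 : ℝ) ≤ j := Nat.cast_nonneg _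
    nlinarith
  have t1 := NotGood_tendsto k j hj hjk b hb0
  have t2 := NoMinus_tendsto k j hj hjk b hb0 (by nlinarith)
  have t3 := Bad_tendsto k j hj hjk (k - j + 2) b b1 hb0 hbb (by push_cast; nlinarith)
  have t4 := Bad_tendsto k j hj hjk 1 b1 b1 (by positivity) le_rfl (by rw [hb1]; push_cast; linarith)
  have t5 := NotFull_tendsto k j hjk b1 (by rw [hb1]; linarith)
  have tsum := (((t1.add t2).add t3).add t4).add t5
  simp only [add_zero] at tsum
  have tsub := (tendsto_const_nhds (x := (1 : ℝ))).sub tsum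
  rw [sub_zero] at tsub
  have hreal : Tendsto (fun n : ℕ => (birthMeasure n).real {t : Finset (Fin n) → ℝ |
      ∀ p : ℝ, pMj k j n t ≤ p → CohomConnected (complexAt k n t p) j}) atTop (nhds 1) := by
    refine tendsto_of_tendsto_of_tendsto_of_le_of_le' tsub tendsto_const_nhds ?_
      (Eventually.of_forall fun n => measureReal_le_one)
    filter_upwards [pp_lt_one (k - j) hd1 b1, eventually_ge_atTop ((j + 2) * (k + j + 3))] with n hp1 hn
    have hn' : (j + 1) * (n / (j + 2)) + (k + 1) + (j + 1) < n := by
      have h1 : k + j + 3 ≤ n / (j + 2) := by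
        rw [Nat.le_div_iff_mul_le (by omega), mul_comm]; exact hn
      have h2 := Nat.mul_div_le n (j + 2)
      nlinarith
    set X : Set (Finset (Fin n) → ℝ) := {t | ∀ p : ℝ, pMj k j n t ≤ p →
      CohomConnected (complexAt k n t p) j} with hX
    have hcov : (Set.univ : Set (Finset (Fin n) → ℝ)) ⊆ X ∪ ((((NotGood k j b n ∪ NoMinus k j b n) ∪
        Bad k j (k - j + 2) b b1 n) ∪ Bad k j 1 b1 b1 n) ∪ NotFull k j b1 n) := by
      intro t _
      by_cases h : t ∈ ((((NotGood k j b n ∪ NoMinus k j b n) ∪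
        Bad k j (k - j + 2) b b1 n) ∪ Bad k j 1 b1 b1 n) ∪ NotFull k j b1 n)
      · exact Or.inr h
      · left
        simp only [Set.mem_union, not_or] at h
        obtain ⟨⟨⟨⟨a1, a2⟩, a3⟩, a4⟩, a5⟩ := h
        exact fun p hp => det_part hj hjk hb0 hbb hp1 hn' a1 a2 a3 a4 a5 p hp
    have hm := measureReal_mono hcov (measure_ne_top (birthMeasure n) _)
    rw [probReal_univ] at hm
    have u1 := measureReal_union_le (μ := birthMeasure n) X ((((NotGood k j b n ∪ NoMinus k j b n) ∪
        Bad k j (k - j + 2) b b1 n) ∪ Bad k j 1 b1 b1 n) ∪ NotFull k j b1 n)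
    have u2 := measureReal_union_le (μ := birthMeasure n) (((NotGood k j b n ∪ NoMinus k j b n) ∪
        Bad k j (k - j + 2) b b1 n) ∪ Bad k j 1 b1 b1 n) (NotFull k j b1 n)
    have u3 := measureReal_union_le (μ := birthMeasure n) ((NotGood k j b n ∪ NoMinus k j b n) ∪
        Bad k j (k - j + 2) b b1 n) (Bad k j 1 b1 b1 n)
    have u4 := measureReal_union_le (μ := birthMeasure n) (NotGood k j b n ∪ NoMinus k j b n)
        (Bad k j (k - j + 2) b b1 n)
    have u5 := measureReal_union_le (μ := birthMeasure n) (NotGood k j b n) (NoMinus k j b n)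
    linarith
  have := ENNReal.tendsto_ofReal hreal
  rw [ENNReal.ofReal_one] at this
  refine this.congr fun n => ?_
  rw [ofReal_measureReal (measure_ne_top _ _)]

end RSC
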